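/- Let m ≥ 2 be even. For f ∈ S(ℝ^m)⊗Cl_{0,m} define the generalized translation τ_y f(x) = (2π)^{−m/2} ∫_{ℝ^m} conj(K_−(ξ,x)) K_−(y,ξ) F_− f(ξ) dξ, where F_− f(ξ) = (2π)^{−m/2}∫_{ℝ^m} K_−(x,ξ) f(x) dx. If f is real-valued and radial, f(x) = f₀(|x|) with f ∈ S(ℝ^m), then for all x, y ∈ ℝ^m: τ_y f(x) = f₀(|x − y|); that is, the generalized translation coincides with the classical translation on radial functions. -/

import Mathlib

open scoped BigOperators
open MeasureTheory

noncomputable section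

namespace CliffordFourier

/-- Concrete model of the complexified Clifford algebra `Cl_{0,m} ⊗ ℂ`:
an element is the family of its complex coefficients on the canonical basis
`e_S = e_{i₁} ⋯ e_{i_k}` (for `S = {i₁ < … < i_k} ⊆ {0,…,m-1}`). -/
def Cl (m : ℕ) : Type := Finset (Fin m) → ℂ

variable {m : ℕ}

instance : NormedAddCommGroup (Cl m) :=
  inferInstanceAs (NormedAddCommGroup (Finset (Fin m) → ℂ))
instance : NormedSpace ℝ (Cl m) :=
  inferInstanceAs (NormedSpace ℝ (Finset (Fin m) → ℂ))
instance : Module ℂ (Cl m) := inferInstanceAs (Module ℂ (Finset (Fin m) → ℂ))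
instance : CompleteSpace (Cl m) := inferInstanceAs (CompleteSpace (Finset (Fin m) → ℂ))

/-- The coefficient of `a` on the basis element `e_S`. -/
def coeff (a : Cl m) : Finset (Fin m) → ℂ := a

/-- Build an element of the Clifford algebra from its coefficients. -/
def ofCoeff (f : Finset (Fin m) → ℂ) : Cl m := f

/-- `1 = e_∅`. -/
instance : One (Cl m) := ⟨ofCoeff fun S => if S = (∅ : Finset (Fin m)) then 1 else 0⟩

/-- Clifford multiplication, determined by the relations `e_i e_j = - e_j e_i` (`i ≠ j`)
and `e_i² = -1`; on basis elements it is given by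
`e_T · e_U = (-1)^{#{(t,u) ∈ T×U : u < t}} · (-1)^{#(T∩U)} · e_{T Δ U}`. -/
instance : Mul (Cl m) :=
  ⟨fun a b => ofCoeff fun S => ∑ T : Finset (Fin m),
    ((-1 : ℂ) ^ ((((T ×ˢ (symmDiff T S)).filter fun p : Fin m × Fin m => p.2 < p.1).card)
        + (T ∩ (symmDiff T S)).card))
      * coeff a T * coeff b (symmDiff T S)⟩

/-- The generator `e_i`. -/
def e (m : ℕ) (i : Fin m) : Cl m := ofCoeff fun S => if S = {i} then 1 else 0

/-- The embedding of a vector `x ∈ ℝ^m` as `x = Σ_i x_i e_i` in the Clifford algebra. -/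
def vec (m : ℕ) (x : Fin m → ℝ) : Cl m := ∑ i : Fin m, (x i : ℂ) • e m i

/-- The Euclidean inner product `⟨x,y⟩ = Σ_i x_i y_i`. -/
def ip (x y : Fin m → ℝ) : ℝ := ∑ i, x i * y i

/-- The Euclidean norm `|x|`. -/
def nrm (x : Fin m → ℝ) : ℝ := Real.sqrt (ip x x)

/-- The wedge product `x∧y = Σ_{j<k} e_j e_k (x_j y_k - x_k y_j)`. -/
def wedge (m : ℕ) (x y : Fin m → ℝ) : Cl m :=
  ∑ j : Fin m, ∑ k : Fin m,
    if j < k then ((x j * y k - x k * y j : ℝ) : ℂ) • (e m j * e m k) else 0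

/-- Complex conjugation of the coefficients. -/
def cconj (a : Cl m) : Cl m := ofCoeff fun S => starRingEnd ℂ (coeff a S)

/-- The Gegenbauer polynomial `C_k^λ(w)`, defined through the standard three-term
recurrence, equivalent to the generating function `(1-2wt+t²)^{-λ} = Σ_k C_k^λ(w) t^k`. -/
def geg (lam : ℝ) : ℕ → ℝ → ℝ
  | 0, _ => 1
  | 1, w => 2 * lam * w
  | (k+2), w => (2 * ((k : ℝ) + 1 + lam) * w * geg lam (k+1) w
      - ((k : ℝ) + 2 * lam) * geg lam k w) / ((k : ℝ) + 2)

/-- The Bessel function of the first kind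
`J_a(z) = Σ_{j≥0} (-1)^j (z/2)^{2j+a} / (j! Γ(j+a+1))`. -/
def besselJ (a z : ℝ) : ℝ :=
  ∑' j : ℕ, ((-1 : ℝ)^j * (z/2) ^ (2*(j:ℝ) + a)) / (j.factorial * Real.Gamma ((j : ℝ) + a + 1))

/-- The entire function `J̃_a(t) = t^{-a} J_a(t) = Σ_{j≥0} (-1)^j (t/2)^{2j} / (j! Γ(j+a+1) 2^a)`
(for `t > 0` this is literally `t^{-a} J_a(t)`). -/
def besselJt (a t : ℝ) : ℝ :=
  ∑' j : ℕ, ((-1 : ℝ)^j * (t/2) ^ (2*j)) / (j.factorial * Real.Gamma ((j : ℝ) + a + 1) * (2:ℝ)^a)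

/-- The renormalized Gegenbauer polynomial `((k+λ)/λ) C_k^λ = C_k^{λ+1} - C_{k-2}^{λ+1}`
(the right-hand side also makes sense for `λ = 0`, i.e. `m = 2`). -/
def gegT (lam : ℝ) (k : ℕ) (w : ℝ) : ℝ :=
  geg (lam + 1) k w - (if 2 ≤ k then geg (lam + 1) (k - 2) w else 0)

/-- `A_λ(w,z) = 2^{λ-1} Γ(λ+1) Σ_{k≥0} (u + (-1)^k) z^{-λ} J_{k+λ}(z) C_k^λ(w)`, where `u = i^m`;
here written using `z^{-λ} J_{k+λ}(z) = z^k J̃_{k+λ}(z)`, which makes the formula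
well defined for all `z ≥ 0` (and all `m ≥ 2`). -/
def AfunR (u : ℂ) (lam w z : ℝ) : ℂ :=
  (((2:ℝ)^(lam - 1) * Real.Gamma (lam + 1) : ℝ) : ℂ) *
    ∑' k : ℕ, (u + (-1 : ℂ)^k) * ((z^k * besselJt ((k : ℝ) + lam) z * geg lam k w : ℝ) : ℂ)

/-- `B_λ(w,z) = -2^{λ-1} Γ(λ) Σ_{k≥0} (k+λ)(u - (-1)^k) z^{-λ} J_{k+λ}(z) C_k^λ(w)`;
here written using `Γ(λ)(k+λ)C_k^λ = Γ(λ+1)(C_k^{λ+1} - C_{k-2}^{λ+1})` and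
`z^{-λ} J_{k+λ}(z) = z^k J̃_{k+λ}(z)`, which makes the formula well defined
for all `z ≥ 0` and all `m ≥ 2` (including `λ = 0`). -/
def BfunR (u : ℂ) (lam w z : ℝ) : ℂ :=
  -(((2:ℝ)^(lam - 1) * Real.Gamma (lam + 1) : ℝ) : ℂ) *
    ∑' k : ℕ, (u - (-1 : ℂ)^k) * ((z^k * besselJt ((k : ℝ) + lam) z * gegT lam k w : ℝ) : ℂ)

/-- `C_λ(w,z) = -2^{λ-1} Γ(λ) Σ_{k≥0} (u + (-1)^k) z^{-λ-1} J_{k+λ}(z) (C_k^λ)'(w)`;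
here written using `Γ(λ) (C_k^λ)' = 2 Γ(λ+1) C_{k-1}^{λ+1}` and
`z^{-λ-1} J_{k+λ}(z) = z^{k-1} J̃_{k+λ}(z)`, which makes the formula well defined
for all `z ≥ 0` and all `m ≥ 2` (including `λ = 0`). -/
def CfunR (u : ℂ) (lam w z : ℝ) : ℂ :=
  -(((2:ℝ)^lam * Real.Gamma (lam + 1) : ℝ) : ℂ) *
    ∑' k : ℕ, (u + (-1 : ℂ)^k) *
      ((z^(k - 1) * besselJt ((k : ℝ) + lam) z
        * (if 1 ≤ k then geg (lam + 1) (k - 1) w else 0) : ℝ) : ℂ)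

/-- The Clifford-Fourier kernel
`K_-(x,y) = A_λ(w,z) + B_λ(w,z) + (x∧y) C_λ(w,z)`
with `λ = (m-2)/2`, `z = |x||y|`, `w = ⟨x,y⟩/(|x||y|)`. -/
def Kminus (m : ℕ) (x y : Fin m → ℝ) : Cl m :=
  (AfunR (Complex.I ^ m) (((m:ℝ) - 2)/2) (ip x y / (nrm x * nrm y)) (nrm x * nrm y)
    + BfunR (Complex.I ^ m) (((m:ℝ) - 2)/2) (ip x y / (nrm x * nrm y)) (nrm x * nrm y)) • (1 : Cl m)
  + CfunR (Complex.I ^ m) (((m:ℝ) - 2)/2) (ip x y / (nrm x * nrm y)) (nrm x * nrm y) • wedge m x y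

/-- The Clifford-Fourier transform `F_- f(y) = (2π)^{-m/2} ∫ K_-(x,y) f(x) dx`. -/
def Fm (m : ℕ) (f : (Fin m → ℝ) → Cl m) (y : Fin m → ℝ) : Cl m :=
  ((2*Real.pi) ^ (-(m:ℝ)/2)) • ∫ x : Fin m → ℝ, Kminus m x y * f x

/-- The generalized translation operator
`τ_y f(x) = (2π)^{-m/2} ∫ conj(K_-(ξ,x)) K_-(y,ξ) (F_- f)(ξ) dξ`. -/
def tau (m : ℕ) (f : (Fin m → ℝ) → Cl m) (y x : Fin m → ℝ) : Cl m :=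
  ((2*Real.pi) ^ (-(m:ℝ)/2)) •
    ∫ ξ : Fin m → ℝ, cconj (Kminus m ξ x) * (Kminus m y ξ * Fm m f ξ)

section AlgebraPart

def sg (T U : Finset (Fin m)) : ℂ := ∏ t ∈ T, ∏ u ∈ U, if u ≤ t then -1 else 1

lemma sg_eq (T U : Finset (Fin m)) :
    (-1 : ℂ) ^ ((((T ×ˢ U).filter fun p : Fin m × Fin m => p.2 < p.1).card)
        + (T ∩ U).card) = sg T U := by
  have h1 : ∀ t u : Fin m, (if u ≤ t then (-1:ℂ) else 1)
      = (if u < t then (-1:ℂ) else 1) * (if u = t then (-1:ℂ) else 1) := by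
    intro t u
    rcases lt_trichotomy u t with h | h | h
    · simp [h, h.le, h.ne]
    · simp [h]
    · simp [h.not_gt, h.not_ge, h.ne']
  unfold sg
  simp_rw [h1, Finset.prod_mul_distrib]
  rw [pow_add]
  congr 1
  · rw [← Finset.prod_product', Finset.prod_ite]
    simp
  · simp only [Finset.prod_ite_eq']
    rw [Finset.prod_ite]
    simp [Finset.filter_mem_eq_inter]

lemma prod_symmDiff (f : Fin m → ℂ) (hf : ∀ i, f i * f i = 1) (T T' : Finset (Fin m)) :
    ∏ t ∈ symmDiff T T', f t = (∏ t ∈ T, f t) * ∏ t ∈ T', f t := by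
  have h : ∀ S : Finset (Fin m), ∏ t ∈ S, f t = ∏ t, if t ∈ S then f t else 1 := by
    intro S; simp
  rw [h, h T, h T', ← Finset.prod_mul_distrib]
  refine Finset.prod_congr rfl fun t _ => ?_
  by_cases h1 : t ∈ T <;> by_cases h2 : t ∈ T' <;> simp [Finset.mem_symmDiff, h1, h2, hf]

lemma sg_left (T T' U : Finset (Fin m)) : sg (symmDiff T T') U = sg T U * sg T' U := by
  unfold sg
  refine prod_symmDiff _ (fun t => ?_) T T'
  rw [← Finset.prod_mul_distrib]
  refine Finset.prod_eq_one fun u _ => ?_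
  split_ifs <;> simp

lemma sg_right (T U U' : Finset (Fin m)) : sg T (symmDiff U U') = sg T U * sg T U' := by
  unfold sg
  rw [← Finset.prod_mul_distrib]
  refine Finset.prod_congr rfl fun t _ => ?_
  refine prod_symmDiff _ (fun u => ?_) U U'
  split_ifs <;> simp

lemma mul_apply (a b : Cl m) (S : Finset (Fin m)) :
    coeff (a * b) S = ∑ T : Finset (Fin m), sg T (symmDiff T S) * coeff a T * coeff b (symmDiff T S) := by
  change (∑ T : Finset (Fin m), _) = _
  refine Finset.sum_congr rfl fun T _ => ?_
  rw [sg_eq]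

lemma Cl_ext {a b : Cl m} (h : ∀ S, coeff a S = coeff b S) : a = b := funext h

lemma coeff_add (a b : Cl m) (S) : coeff (a + b) S = coeff a S + coeff b S := rfl
lemma coeff_smul (c : ℂ) (a : Cl m) (S) : coeff (c • a) S = c * coeff a S := rfl
lemma coeff_rsmul (c : ℝ) (a : Cl m) (S) : coeff (c • a) S = c * coeff a S := by
  change c • (a S) = _
  simp [coeff]
lemma coeff_zero (S) : coeff (0 : Cl m) S = 0 := rfl
lemma coeff_one (S) : coeff (1 : Cl m) S = if S = ∅ then 1 else 0 := rfl

lemma sg_empty_left (U : Finset (Fin m)) : sg ∅ U = 1 := by simp [sg]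
lemma sg_empty_right (U : Finset (Fin m)) : sg U ∅ = 1 := by simp [sg]

lemma Cl_assoc (a b c : Cl m) : a * b * c = a * (b * c) := by
  refine Cl_ext fun S => ?_
  simp only [mul_apply, Finset.mul_sum, Finset.sum_mul]
  rw [Finset.sum_comm]
  refine Finset.sum_congr rfl fun R _ => ?_
  refine Fintype.sum_equiv ⟨fun T => symmDiff R T, fun T => symmDiff R T,
    fun T => by simp, fun T => by simp⟩ _ _ fun T => ?_
  simp only [Equiv.coe_fn_mk]
  have e1 : symmDiff (symmDiff R T) (symmDiff R S) = symmDiff T S := by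
    rw [symmDiff_comm R T, symmDiff_assoc, symmDiff_symmDiff_cancel_left]
  rw [e1, sg_left R T]
  have e2 : sg R (symmDiff R T) = sg R (symmDiff R S) * sg R (symmDiff T S) := by
    rw [← sg_right, symmDiff_comm T S, symmDiff_assoc, symmDiff_symmDiff_cancel_left]
  rw [e2]
  ring

@[reducible] def clRing : Ring (Cl m) :=
  { (inferInstance : AddCommGroup (Cl m)), (inferInstance : Mul (Cl m)), (inferInstance : One (Cl m)) with
    left_distrib := fun a b c => Cl_ext fun S => by
      simp only [mul_apply, coeff_add, mul_add, Finset.sum_add_distrib]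
    right_distrib := fun a b c => Cl_ext fun S => by
      simp only [mul_apply, coeff_add, mul_add, add_mul, Finset.sum_add_distrib]
    zero_mul := fun a => Cl_ext fun S => by simp [mul_apply, coeff_zero]
    mul_zero := fun a => Cl_ext fun S => by simp [mul_apply, coeff_zero]
    mul_assoc := Cl_assoc
    one_mul := fun a => Cl_ext fun S => by
      simp only [mul_apply, coeff_one]
      rw [Finset.sum_eq_single ∅]
      · simp only [sg_empty_left, if_true, one_mul]; congr 1; exact bot_symmDiff S
      · intro b _ hb; simp [hb]
      · simp
    mul_one := fun a => Cl_ext fun S => by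
      simp only [mul_apply, coeff_one]
      rw [Finset.sum_eq_single S]
      · simp [sg_empty_right]
      · intro b _ hb
        have : symmDiff b S ≠ ∅ := by
          intro h; apply hb; exact symmDiff_eq_bot.1 h
        simp [this]
      · simp }

attribute [local instance] clRing

lemma clTower : IsScalarTower ℂ (Cl m) (Cl m) := ⟨fun r a b => Cl_ext fun S => by
  simp only [smul_eq_mul, mul_apply, coeff_smul, Finset.mul_sum]
  refine Finset.sum_congr rfl fun T _ => by ring⟩

lemma clComm : SMulCommClass ℂ (Cl m) (Cl m) := ⟨fun r a b => Cl_ext fun S => by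
  simp only [smul_eq_mul, mul_apply, coeff_smul, Finset.mul_sum]
  refine Finset.sum_congr rfl fun T _ => by ring⟩

attribute [local instance] clTower clComm

lemma rsmul_eq (r : ℝ) (a : Cl m) : r • a = (r : ℂ) • a := Cl_ext fun S => by
  rw [coeff_rsmul, coeff_smul]

def bas (A : Finset (Fin m)) : Cl m := ofCoeff fun S => if S = A then 1 else 0

lemma bas_mul (A B : Finset (Fin m)) : bas A * bas B = sg A B • bas (symmDiff A B) := by
  refine Cl_ext fun S => ?_
  rw [mul_apply, coeff_smul]
  simp only [bas, coeff, ofCoeff]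
  rw [Finset.sum_eq_single A]
  · by_cases h : S = symmDiff A B
    · subst h; simp
    · have : symmDiff A S ≠ B := by
        intro h'; apply h; rw [← h']; simp
      simp [h, this]
  · intro b _ hb; simp [hb]
  · simp

lemma e_eq (i : Fin m) : e m i = bas {i} := rfl

lemma e_sq (i : Fin m) : e m i * e m i = -1 := by
  rw [e_eq, bas_mul]
  have : (symmDiff {i} {i} : Finset (Fin m)) = ∅ := by simp
  rw [this]
  refine Cl_ext fun S => ?_
  rw [coeff_smul]
  simp only [sg, Finset.prod_singleton, le_refl, if_true]
  change _ = -(coeff 1 S)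
  rw [coeff_one]; simp only [bas, coeff, ofCoeff]; split_ifs <;> simp

lemma e_anti (i j : Fin m) (h : i ≠ j) : e m i * e m j = - (e m j * e m i) := by
  rw [e_eq, e_eq, bas_mul, bas_mul, symmDiff_comm, ← neg_smul]
  congr 1
  simp only [sg, Finset.prod_singleton]
  rcases lt_or_gt_of_ne h with h | h
  · simp [h.le, h.not_ge]
  · simp [h.le, h.not_ge]

end AlgebraPart

section VecPart
attribute [local instance] clRing clTower clComm

/-- sum over pairs `j<l` -/
def sumlt {M : Type*} [AddCommMonoid M] (X : Fin m → Fin m → M) : M :=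
  ∑ j : Fin m, ∑ k : Fin m, if j < k then X j k else 0

lemma sumlt_congr {M : Type*} [AddCommMonoid M] {X Y : Fin m → Fin m → M}
    (h : ∀ j k, j < k → X j k = Y j k) : sumlt X = sumlt Y := by
  unfold sumlt
  refine Finset.sum_congr rfl fun j _ => Finset.sum_congr rfl fun k _ => ?_
  split_ifs with hjk
  · exact h j k hjk
  · rfl

lemma sumlt_add {M : Type*} [AddCommMonoid M] (X Y : Fin m → Fin m → M) :
    sumlt (fun j k => X j k + Y j k) = sumlt X + sumlt Y := by
  unfold sumlt
  simp only [← Finset.sum_add_distrib]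
  refine Finset.sum_congr rfl fun j _ => Finset.sum_congr rfl fun k _ => ?_
  split_ifs <;> simp

lemma sumlt_map {M N : Type*} [AddCommMonoid M] [AddCommMonoid N] (φ : M →+ N)
    (X : Fin m → Fin m → M) :
    φ (sumlt X) = sumlt (fun j k => φ (X j k)) := by
  unfold sumlt
  simp only [map_sum]
  refine Finset.sum_congr rfl fun j _ => Finset.sum_congr rfl fun k _ => ?_
  split_ifs <;> simp

lemma sum_split {M : Type*} [AddCommMonoid M] (X : Fin m → Fin m → M) :
    ∑ j, ∑ l, X j l = ∑ j, X j j + sumlt (fun j l => X j l + X l j) := by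
  rw [sumlt_add]
  have h2 : sumlt (fun j l => X l j) = ∑ j : Fin m, ∑ k : Fin m, if k < j then X j k else 0 := by
    unfold sumlt; rw [Finset.sum_comm]
  rw [h2, sumlt]
  have h3 : ∑ j, X j j = ∑ j : Fin m, ∑ k : Fin m, if j = k then X j k else 0 := by simp
  rw [h3]
  simp only [← Finset.sum_add_distrib]
  refine Finset.sum_congr rfl fun j _ => Finset.sum_congr rfl fun k _ => ?_
  rcases lt_trichotomy j k with h | h | h
  · simp [h, h.ne, h.not_gt]
  · simp [h]
  · simp [h, h.ne', h.not_gt]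

lemma sumlt_pair {M : Type*} [AddCommGroup M] (f : Fin m → M) :
    sumlt (fun j l => f j + f l) = (m : ℤ) • ∑ j, f j - ∑ j, f j := by
  have := sum_split (fun j _ : Fin m => f j)
  simp only [Finset.sum_const, Finset.card_univ, Fintype.card_fin] at this
  rw [← Finset.smul_sum] at this
  rw [natCast_zsmul, this]; abel

lemma vec_mul_vec (x y : Fin m → ℝ) :
    vec m x * vec m y = ∑ j, ∑ l, ((x j * y l : ℝ) : ℂ) • (e m j * e m l) := by
  unfold vec
  rw [Finset.sum_mul_sum]
  refine Finset.sum_congr rfl fun j _ => Finset.sum_congr rfl fun k _ => ?_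
  rw [smul_mul_smul_comm]; simp

lemma wedge_eq (x y : Fin m → ℝ) :
    wedge m x y = vec m x * vec m y + ((ip x y : ℝ) : ℂ) • (1 : Cl m) := by
  rw [vec_mul_vec, sum_split]
  have h1 : (∑ j, ((x j * y j : ℝ) : ℂ) • (e m j * e m j)) = - (((ip x y : ℝ) : ℂ) • (1 : Cl m)) := by
    simp only [e_sq, ip, Complex.ofReal_sum, Finset.sum_smul, smul_neg, Finset.sum_neg_distrib]
  rw [h1]
  have h2 : wedge m x y = sumlt (fun j l => ((x j * y l - x l * y j : ℝ) : ℂ) • (e m j * e m l)) := rfl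
  rw [h2]
  have h3 : sumlt (fun j l => ((x j * y l - x l * y j : ℝ) : ℂ) • (e m j * e m l))
     = sumlt (fun j l => ((x j * y l : ℝ) : ℂ) • (e m j * e m l) + ((x l * y j : ℝ) : ℂ) • (e m l * e m j)) := by
    refine sumlt_congr fun j l h => ?_
    rw [e_anti l j h.ne']
    push_cast
    module
  rw [h3]; abel

lemma ip_comm (x y : Fin m → ℝ) : ip x y = ip y x := by
  unfold ip; exact Finset.sum_congr rfl fun i _ => mul_comm _ _

lemma wedge_swap (x y : Fin m → ℝ) : wedge m y x = - wedge m x y := by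
  unfold wedge
  simp only [← Finset.sum_neg_distrib]
  refine Finset.sum_congr rfl fun j _ => Finset.sum_congr rfl fun k _ => ?_
  split_ifs
  · rw [← neg_smul]; congr 1; push_cast; ring
  · simp

lemma vec_swap (x y : Fin m → ℝ) :
    vec m y * vec m x = - (vec m x * vec m y) - ((2 * ip x y : ℝ) : ℂ) • (1 : Cl m) := by
  have h1 := wedge_eq x y
  have h2 := wedge_eq y x
  rw [wedge_swap, h1, ip_comm y x] at h2
  rw [← sub_eq_iff_eq_add] at h2
  rw [← h2]; push_cast; module

lemma wedge_self (x : Fin m → ℝ) : wedge m x x = 0 := by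
  unfold wedge
  refine Finset.sum_eq_zero fun j _ => Finset.sum_eq_zero fun k _ => ?_
  split_ifs
  · have : x j * x k - x k * x j = 0 := by ring
    rw [this]; simp
  · rfl

lemma vec_sq (x : Fin m → ℝ) : vec m x * vec m x = - (((ip x x : ℝ) : ℂ) • (1 : Cl m)) := by
  have := wedge_eq x x
  rw [wedge_self] at this
  exact eq_neg_of_add_eq_zero_left this.symm

/-- (xξ)(ξ∧x) = t + s xξ -/
lemma vec_wedge_right (x ξ : Fin m → ℝ) :
    (vec m x * vec m ξ) * wedge m ξ x
      = ((ip ξ ξ * ip x x : ℝ) : ℂ) • (1 : Cl m) + ((ip ξ x : ℝ) : ℂ) • (vec m x * vec m ξ) := by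
  rw [wedge_eq, mul_add, mul_smul_comm, mul_one]
  congr 1
  rw [mul_assoc, ← mul_assoc (vec m ξ) (vec m ξ), vec_sq, neg_mul, mul_neg, smul_mul_assoc, one_mul,
    mul_smul_comm, vec_sq]
  push_cast; module

/-- (ξ∧y)(ξy) = -t - s ξy -/
lemma vec_wedge_left (y ξ : Fin m → ℝ) :
    wedge m ξ y * (vec m ξ * vec m y)
      = - (((ip ξ ξ * ip y y : ℝ) : ℂ) • (1 : Cl m)) - ((ip ξ y : ℝ) : ℂ) • (vec m ξ * vec m y) := by
  have h : wedge m ξ y = - (vec m y * vec m ξ) - ((ip ξ y : ℝ) : ℂ) • (1 : Cl m) := by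
    rw [← neg_neg (wedge m ξ y), ← wedge_swap, wedge_eq, ip_comm y ξ]; abel
  rw [h, sub_mul, smul_mul_assoc, one_mul]
  congr 1
  rw [neg_mul, mul_assoc, ← mul_assoc (vec m ξ) (vec m ξ), vec_sq, neg_mul, mul_neg, smul_mul_assoc, one_mul,
    mul_smul_comm, vec_sq]
  push_cast; module

lemma wedge_sq (x y : Fin m → ℝ) :
    wedge m x y * wedge m x y = - (((ip x x * ip y y - ip x y ^ 2 : ℝ) : ℂ) • (1 : Cl m)) := by
  nth_rw 2 [wedge_eq]
  rw [mul_add, vec_wedge_left, mul_smul_comm, mul_one, wedge_eq]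
  push_cast; module

/-- the tangent vector of the rotation in the plane `(j,l)` -/
def tang (j l : Fin m) (ξ : Fin m → ℝ) : Fin m → ℝ :=
  fun i => if i = l then ξ j else if i = j then - ξ l else 0

lemma vec_tang (j l : Fin m) (h : j < l) (ξ : Fin m → ℝ) :
    vec m (tang j l ξ) = ((ξ j : ℝ) : ℂ) • e m l - ((ξ l : ℝ) : ℂ) • e m j := by
  unfold vec tang
  have : ∀ i : Fin m, (((if i = l then ξ j else if i = j then - ξ l else 0 : ℝ)) : ℂ) • e m i
    = (if i = l then ((ξ j : ℝ) : ℂ) • e m i else 0) + (if i = j then - (((ξ l : ℝ) : ℂ) • e m i) else 0) := by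
    intro i
    by_cases h1 : i = l
    · subst h1; simp [h.ne']
    · by_cases h2 : i = j
      · subst h2; simp [h1]
      · simp [h1, h2]
  rw [Finset.sum_congr rfl fun i _ => this i, Finset.sum_add_distrib]
  simp [sub_eq_add_neg]

lemma ip_tang (j l : Fin m) (h : j < l) (ξ x : Fin m → ℝ) :
    ip (tang j l ξ) x = ξ j * x l - ξ l * x j := by
  unfold ip tang
  have : ∀ i : Fin m, (if i = l then ξ j else if i = j then - ξ l else 0) * x i
    = (if i = l then ξ j * x i else 0) + (if i = j then - (ξ l * x i) else 0) := by
    intro i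
    by_cases h1 : i = l
    · subst h1; simp [h.ne']
    · by_cases h2 : i = j
      · subst h2; simp [h1]
      · simp [h1, h2]
  rw [Finset.sum_congr rfl fun i _ => this i, Finset.sum_add_distrib]
  simp [sub_eq_add_neg]

lemma sum_tang_left (ξ : Fin m → ℝ) :
    sumlt (fun j l => (e m j * e m l) * vec m (tang j l ξ)) = - (((m:ℂ) - 1) • vec m ξ) := by
  have : sumlt (fun j l => (e m j * e m l) * vec m (tang j l ξ))
     = sumlt (fun j l => - (((ξ j : ℝ) : ℂ) • e m j) + - (((ξ l : ℝ) : ℂ) • e m l)) := by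
    refine sumlt_congr fun j l h => ?_
    rw [vec_tang j l h, mul_sub, mul_smul_comm, mul_smul_comm, mul_assoc, e_sq, e_anti j l h.ne,
      neg_mul, mul_assoc, e_sq]
    simp only [mul_neg, mul_one, neg_neg, smul_neg]; abel
  rw [this, sumlt_pair (fun j => - (((ξ j : ℝ) : ℂ) • e m j)), Finset.sum_neg_distrib]
  change (m:ℤ) • - (vec m ξ) - - vec m ξ = _
  rw [natCast_zsmul, ← Nat.cast_smul_eq_nsmul ℂ]
  module

lemma sum_tang_right (ξ : Fin m → ℝ) :
    sumlt (fun j l => vec m (tang j l ξ) * (e m j * e m l)) = (((m:ℂ) - 1) • vec m ξ) := by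
  have : sumlt (fun j l => vec m (tang j l ξ) * (e m j * e m l))
     = sumlt (fun j l => (((ξ j : ℝ) : ℂ) • e m j) + (((ξ l : ℝ) : ℂ) • e m l)) := by
    refine sumlt_congr fun j l h => ?_
    rw [vec_tang j l h, sub_mul, smul_mul_assoc, smul_mul_assoc, ← mul_assoc, ← mul_assoc, e_sq,
      e_anti l j h.ne', neg_mul, mul_assoc, e_sq]
    simp only [neg_mul, mul_neg, mul_one, one_mul, neg_neg, smul_neg]; abel
  rw [this, sumlt_pair (fun j => (((ξ j : ℝ) : ℂ) • e m j))]
  change (m:ℤ) • (vec m ξ) - vec m ξ = _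
  rw [natCast_zsmul, ← Nat.cast_smul_eq_nsmul ℂ]
  module

lemma sum_ip_tang (ξ x : Fin m → ℝ) :
    sumlt (fun j l => ((ip (tang j l ξ) x : ℝ) : ℂ) • (e m j * e m l)) = wedge m ξ x := by
  refine sumlt_congr fun j l h => ?_
  rw [ip_tang j l h]

end VecPart

section RotPart
attribute [local instance] clRing clTower clComm

def rot (j l : Fin m) (θ : ℝ) (ξ : Fin m → ℝ) : Fin m → ℝ :=
  fun i => if i = l then Real.sin θ * ξ j + Real.cos θ * ξ l
    else if i = j then Real.cos θ * ξ j - Real.sin θ * ξ l else ξ i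

lemma rot_l (j l : Fin m) (θ : ℝ) (ξ : Fin m → ℝ) :
    rot j l θ ξ l = Real.sin θ * ξ j + Real.cos θ * ξ l := by simp [rot]
lemma rot_j (j l : Fin m) (h : j < l) (θ : ℝ) (ξ : Fin m → ℝ) :
    rot j l θ ξ j = Real.cos θ * ξ j - Real.sin θ * ξ l := by simp [rot, h.ne]
lemma rot_o (j l i : Fin m) (h1 : i ≠ j) (h2 : i ≠ l) (θ : ℝ) (ξ : Fin m → ℝ) :
    rot j l θ ξ i = ξ i := by simp [rot, h1, h2]

lemma rot_zero (j l : Fin m) (ξ : Fin m → ℝ) : rot j l 0 ξ = ξ := by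
  funext i
  unfold rot
  split_ifs with h1 h2 <;> simp_all

lemma ip_rot (j l : Fin m) (h : j < l) (θ : ℝ) (ξ η : Fin m → ℝ) :
    ip (rot j l θ ξ) (rot j l θ η) = ip ξ η := by
  unfold ip
  rw [← sub_eq_zero, ← Finset.sum_sub_distrib]
  rw [← Finset.sum_subset (Finset.subset_univ {j, l})]
  · rw [Finset.sum_pair h.ne, rot_l, rot_l, rot_j j l h, rot_j j l h]
    have := Real.sin_sq_add_cos_sq θ
    linear_combination (ξ j * η j + ξ l * η l) * this
  · intro i _ hi
    simp only [Finset.mem_insert, Finset.mem_singleton, not_or] at hi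
    rw [rot_o j l i hi.1 hi.2, rot_o j l i hi.1 hi.2, sub_self]

lemma rot_hasDerivAt (j l : Fin m) (h : j < l) (θ : ℝ) (ξ : Fin m → ℝ) :
    HasDerivAt (fun θ => rot j l θ ξ) (tang j l (rot j l θ ξ)) θ := by
  rw [hasDerivAt_pi]
  intro i
  by_cases h1 : i = l
  · subst h1
    simp only [rot_l, tang, if_true, rot_j j i h]
    have := ((Real.hasDerivAt_sin θ).mul_const (ξ j)).add ((Real.hasDerivAt_cos θ).mul_const (ξ i))
    exact this.congr_deriv (by ring)
  · by_cases h2 : i = j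
    · subst h2
      simp only [rot_j i l h, tang, h1, if_false, if_true, rot_l]
      have := ((Real.hasDerivAt_cos θ).mul_const (ξ i)).sub ((Real.hasDerivAt_sin θ).mul_const (ξ l))
      exact this.congr_deriv (by ring)
    · simp only [rot_o j l i h2 h1, tang, h1, h2, if_false]
      exact hasDerivAt_const _ _

lemma rot_continuous (j l : Fin m) (θ : ℝ) : Continuous (rot j l θ) := by
  refine continuous_pi fun i => ?_
  unfold rot
  split_ifs <;> fun_prop

def rotLin (j l : Fin m) (h : j < l) (θ : ℝ) :
    EuclideanSpace ℝ (Fin m) →ₗᵢ[ℝ] EuclideanSpace ℝ (Fin m) where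
  toFun v := WithLp.toLp 2 (rot j l θ (WithLp.ofLp v))
  map_add' v w := by
    ext i
    simp only [rot, PiLp.add_apply]
    split_ifs <;> ring
  map_smul' c v := by
    ext i
    simp only [rot, PiLp.smul_apply, smul_eq_mul, RingHom.id_apply]
    split_ifs <;> ring
  norm_map' v := by
    rw [EuclideanSpace.norm_eq, EuclideanSpace.norm_eq]
    congr 1
    have := ip_rot j l h θ (WithLp.ofLp v) (WithLp.ofLp v)
    simpa [ip, ← pow_two] using this

lemma rot_mp (j l : Fin m) (h : j < l) (θ : ℝ) :
    MeasurePreserving (rot j l θ) (volume : Measure (Fin m → ℝ)) volume := by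
  have h1 := ((rotLin j l h θ).toLinearIsometryEquiv rfl).measurePreserving
  have h2 := (PiLp.volume_preserving_ofLp (Fin m)).comp (h1.comp (PiLp.volume_preserving_toLp (Fin m)))
  exact h2

@[reducible] def clNS : NormedSpace ℂ (Cl m) := inferInstanceAs (NormedSpace ℂ (Finset (Fin m) → ℂ))
attribute [local instance] clNS

lemma ip_self_nonneg (ξ : Fin m → ℝ) : 0 ≤ ip ξ ξ :=
  Finset.sum_nonneg fun i _ => mul_self_nonneg _

lemma abs_le_of_ip {ξ : Fin m → ℝ} {R : ℝ} (h : ip ξ ξ ≤ R) (i : Fin m) : |ξ i| ≤ R + 1 := by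
  have h1 : ξ i * ξ i ≤ ip ξ ξ :=
    Finset.single_le_sum (f := fun i => ξ i * ξ i) (fun i _ => mul_self_nonneg _) (Finset.mem_univ i)
  have h2 := abs_mul_abs_self (ξ i)
  nlinarith [abs_nonneg (ξ i)]

lemma bdd_of_cont {E : Type*} [NormedAddCommGroup E] {Φ : (Fin m → ℝ) → E} (hΦ : Continuous Φ) (R : ℝ) :
    ∃ M : ℝ, ∀ ξ, ip ξ ξ ≤ R → ‖Φ ξ‖ ≤ M := by
  obtain ⟨M, hM⟩ := (isCompact_closedBall (0 : Fin m → ℝ) (|R| + 1)).exists_bound_of_continuousOn hΦ.continuousOn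
  refine ⟨M, fun ξ hξ => hM ξ ?_⟩
  rw [mem_closedBall_zero_iff, pi_norm_le_iff_of_nonneg (by positivity)]
  intro i
  have := abs_le_of_ip hξ i
  rw [Real.norm_eq_abs]
  linarith [le_abs_self R]

/-- weights: integrable, rotation invariant, compactly supported -/
structure Wt (R : ℝ) (h : (Fin m → ℝ) → ℂ) : Prop where
  int : Integrable h
  inv : ∀ j l, j < l → ∀ θ ξ, h (rot j l θ ξ) = h ξ
  supp : ∀ ξ, R < ip ξ ξ → h ξ = 0

lemma Wt.integrable_smul {R : ℝ} {h : (Fin m → ℝ) → ℂ} (hh : Wt R h) {E : Type*} [NormedAddCommGroup E]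
    [NormedSpace ℂ E] {Φ : (Fin m → ℝ) → E} (hm : AEStronglyMeasurable Φ)
    {M : ℝ} (hM : ∀ ξ, ip ξ ξ ≤ R → ‖Φ ξ‖ ≤ M) : Integrable (fun ξ => h ξ • Φ ξ) := by
  refine Integrable.mono' (hh.int.norm.mul_const M) (hh.int.aestronglyMeasurable.smul hm) ?_
  refine Filter.Eventually.of_forall fun ξ => ?_
  rw [norm_smul]
  by_cases hξ : ip ξ ξ ≤ R
  · exact mul_le_mul_of_nonneg_left (hM ξ hξ) (norm_nonneg _)
  · rw [hh.supp ξ (not_le.1 hξ)]; simp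

lemma Wt.ibp {R : ℝ} {h : (Fin m → ℝ) → ℂ} (hh : Wt R h) {Φ Φ' : (Fin m → ℝ) → Cl m}
    (hΦ : Continuous Φ) (hΦ' : Continuous Φ') (j l : Fin m) (hjl : j < l)
    (hd : ∀ θ ξ, HasDerivAt (fun θ => Φ (rot j l θ ξ)) (Φ' (rot j l θ ξ)) θ) :
    ∫ ξ, h ξ • Φ' ξ = 0 := by
  obtain ⟨M, hM⟩ := bdd_of_cont hΦ R
  obtain ⟨M', hM'⟩ := bdd_of_cont hΦ' R
  have key := hasDerivAt_integral_of_dominated_loc_of_deriv_le (𝕜 := ℝ) (μ := (volume : Measure (Fin m → ℝ)))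
    (F := fun θ ξ => h ξ • Φ (rot j l θ ξ)) (F' := fun θ ξ => h ξ • Φ' (rot j l θ ξ))
    (x₀ := (0:ℝ)) (s := Set.univ) (bound := fun ξ => ‖h ξ‖ * M') Filter.univ_mem
    (Filter.Eventually.of_forall fun θ => hh.int.aestronglyMeasurable.smul
      (hΦ.comp (rot_continuous j l θ)).aestronglyMeasurable)
    (hh.integrable_smul (hΦ.comp (rot_continuous j l 0)).aestronglyMeasurable (M := M)
      (fun ξ hξ => hM _ (by rw [ip_rot j l hjl]; exact hξ)))
    (hh.int.aestronglyMeasurable.smul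
      (hΦ'.comp (rot_continuous j l 0)).aestronglyMeasurable)
    (Filter.Eventually.of_forall fun ξ θ _ => by
      rw [norm_smul]
      by_cases hξ : ip ξ ξ ≤ R
      · exact mul_le_mul_of_nonneg_left (hM' _ (by rw [ip_rot j l hjl]; exact hξ)) (norm_nonneg _)
      · rw [hh.supp ξ (not_le.1 hξ)]; simp)
    (hh.int.norm.mul_const M')
    (Filter.Eventually.of_forall fun ξ θ _ => by
      have := (hd θ ξ).const_smul (h ξ)
      exact this)
  have h2 := key.2
  have hconst : (fun θ => ∫ ξ, h ξ • Φ (rot j l θ ξ)) = fun _ => ∫ ξ, h ξ • Φ ξ := by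
    funext θ
    have hint : Integrable (fun ξ => h ξ • Φ ξ) := hh.integrable_smul hΦ.aestronglyMeasurable hM
    have mp := rot_mp j l hjl θ
    have h3 := integral_map (μ := (volume : Measure (Fin m → ℝ))) mp.measurable.aemeasurable (f := fun ξ => h ξ • Φ ξ)
      (by rw [mp.map_eq]; exact hint.aestronglyMeasurable)
    rw [mp.map_eq] at h3
    rw [h3]
    simp only [hh.inv j l hjl]
  rw [hconst] at h2
  have h4 := h2.unique (hasDerivAt_const (0:ℝ) _)
  simpa only [rot_zero] using h4

lemma hasDerivAt_mul {F G : ℝ → Cl m} {F' G' : Cl m} {θ : ℝ} (hF : HasDerivAt F F' θ)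
    (hG : HasDerivAt G G' θ) : HasDerivAt (fun θ => F θ * G θ) (F' * G θ + F θ * G') θ := by
  have hF1 : ∀ S, HasDerivAt (fun θ => coeff (F θ) S) (coeff F' S) θ := fun S => (hasDerivAt_pi.1 hF) S
  have hG1 : ∀ S, HasDerivAt (fun θ => coeff (G θ) S) (coeff G' S) θ := fun S => (hasDerivAt_pi.1 hG) S
  refine hasDerivAt_pi.2 fun S => ?_
  change HasDerivAt (fun θ => coeff (F θ * G θ) S) (coeff (F' * G θ + F θ * G') S) θ
  simp only [mul_apply, coeff_add, ← Finset.sum_add_distrib]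
  refine HasDerivAt.fun_sum fun T _ => ?_
  have := ((hF1 T).const_mul (sg T (symmDiff T S))).mul (hG1 (symmDiff T S))
  exact this

lemma continuous_mul' {X : Type*} [TopologicalSpace X] {F G : X → Cl m} (hF : Continuous F)
    (hG : Continuous G) : Continuous (fun x => F x * G x) := by
  have hF1 : ∀ S, Continuous (fun x => coeff (F x) S) := fun S => (continuous_pi_iff.1 hF) S
  have hG1 : ∀ S, Continuous (fun x => coeff (G x) S) := fun S => (continuous_pi_iff.1 hG) S
  refine continuous_pi fun S => ?_
  change Continuous (fun x => coeff (F x * G x) S)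
  simp only [mul_apply]
  exact continuous_finsetSum _ fun T _ => ((hF1 T).const_smul (sg T (symmDiff T S))).mul (hG1 _)

lemma continuous_vec : Continuous (vec m) := by
  unfold vec
  refine continuous_finsetSum _ fun i _ => ?_
  have : Continuous fun x : Fin m → ℝ => ((x i : ℝ) : ℂ) := by fun_prop
  exact this.smul continuous_const

lemma continuous_ip {X : Type*} [TopologicalSpace X] {F G : X → (Fin m → ℝ)} (hF : Continuous F)
    (hG : Continuous G) : Continuous (fun x => ip (F x) (G x)) := by
  unfold ip
  refine continuous_finsetSum _ fun i _ => ?_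
  fun_prop

/-- zonal functions -/
def U (p q : ℝ → ℝ → ℝ) (x y : Fin m → ℝ) : Cl m :=
  ((p (ip x y) (ip x x * ip y y) : ℝ) : ℂ) • (1 : Cl m)
   + ((q (ip x y) (ip x x * ip y y) : ℝ) : ℂ) • (vec m y * vec m x)

/-- eigenfunction data -/
structure Eig (m : ℕ) (κ : ℝ) (p q p' q' : ℝ → ℝ → ℝ) : Prop where
  cp : Continuous (fun z : ℝ × ℝ => p z.1 z.2)
  cq : Continuous (fun z : ℝ × ℝ => q z.1 z.2)
  cp' : Continuous (fun z : ℝ × ℝ => p' z.1 z.2)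
  cq' : Continuous (fun z : ℝ × ℝ => q' z.1 z.2)
  dp : ∀ s t, HasDerivAt (fun s => p s t) (p' s t) s
  dq : ∀ s t, HasDerivAt (fun s => q s t) (q' s t) s
  e1 : ∀ s t, - s * p' s t + t * q' s t = κ * p s t
  e2 : ∀ s t, - p' s t + (m - 1) * q s t + s * q' s t = κ * q s t

def Uc (p : ℝ → ℝ → ℝ) (x y : Fin m → ℝ) : ℂ := ((p (ip x y) (ip x x * ip y y) : ℝ) : ℂ)

lemma U_eq (p q : ℝ → ℝ → ℝ) (x y : Fin m → ℝ) :
  U p q x y = Uc p x y • 1 + Uc q x y • (vec m y * vec m x) := rfl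

lemma continuous_Uc {X : Type*} [TopologicalSpace X] {p : ℝ → ℝ → ℝ}
    (hp : Continuous (fun z : ℝ × ℝ => p z.1 z.2)) {F G : X → (Fin m → ℝ)} (hF : Continuous F)
    (hG : Continuous G) : Continuous (fun x => Uc p (F x) (G x)) := by
  unfold Uc
  exact Complex.continuous_ofReal.comp (hp.comp ((continuous_ip hF hG).prodMk
    ((continuous_ip hF hF).mul (continuous_ip hG hG))))

lemma continuous_U {X : Type*} [TopologicalSpace X] {p q : ℝ → ℝ → ℝ}
    (hp : Continuous (fun z : ℝ × ℝ => p z.1 z.2)) (hq : Continuous (fun z : ℝ × ℝ => q z.1 z.2))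
    {F G : X → (Fin m → ℝ)} (hF : Continuous F)
    (hG : Continuous G) : Continuous (fun x => U p q (F x) (G x)) := by
  simp only [U_eq]
  exact ((continuous_Uc hp hF hG).smul continuous_const).add ((continuous_Uc hq hF hG).smul
    (continuous_mul' (continuous_vec.comp hG) (continuous_vec.comp hF)))

lemma ip_add_smul_deriv {c : ℝ → (Fin m → ℝ)} {c' : Fin m → ℝ} {θ : ℝ} (hc : HasDerivAt c c' θ)
    (x : Fin m → ℝ) : HasDerivAt (fun θ => ip (c θ) x) (ip c' x) θ := by
  unfold ip
  exact HasDerivAt.fun_sum fun i _ => ((hasDerivAt_pi.1 hc) i).mul_const (x i)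

lemma vec_deriv {c : ℝ → (Fin m → ℝ)} {c' : Fin m → ℝ} {θ : ℝ} (hc : HasDerivAt c c' θ) :
    HasDerivAt (fun θ => vec m (c θ)) (vec m c') θ := by
  unfold vec
  refine HasDerivAt.fun_sum fun i _ => ?_
  exact (((hasDerivAt_pi.1 hc) i).ofReal_comp).smul_const (e m i)

lemma Uc_deriv {p p' : ℝ → ℝ → ℝ} (dp : ∀ s t, HasDerivAt (fun s => p s t) (p' s t) s)
    (j l : Fin m) (h : j < l) (θ : ℝ) (ξ x : Fin m → ℝ) :
    HasDerivAt (fun θ => Uc p (rot j l θ ξ) x)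
      (Uc p' (rot j l θ ξ) x * ((ip (tang j l (rot j l θ ξ)) x : ℝ) : ℂ)) θ := by
  unfold Uc
  simp only [ip_rot j l h]
  have h1 := ip_add_smul_deriv (rot_hasDerivAt j l h θ ξ) x
  have h2 := HasDerivAt.comp θ (dp (ip (rot j l θ ξ) x) (ip ξ ξ * ip x x)) h1
  have h3 := h2.ofReal_comp
  push_cast at h3
  exact h3

lemma Uc_symm (p : ℝ → ℝ → ℝ) (x y : Fin m → ℝ) : Uc p x y = Uc p y x := by
  unfold Uc; rw [ip_comm x y, mul_comm (ip x x)]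

/-- derivative of `U(ξ,x)` in direction `v` -/
def UL (p' q q' : ℝ → ℝ → ℝ) (ξ x v : Fin m → ℝ) : Cl m :=
  (Uc p' ξ x * ((ip v x : ℝ) : ℂ)) • 1
    + (Uc q ξ x • (vec m x * vec m v) + (Uc q' ξ x * ((ip v x : ℝ) : ℂ)) • (vec m x * vec m ξ))

/-- derivative of `U(y,ξ)` in direction `v` -/
def UR (p' q q' : ℝ → ℝ → ℝ) (y ξ v : Fin m → ℝ) : Cl m :=
  (Uc p' ξ y * ((ip v y : ℝ) : ℂ)) • 1
    + (Uc q ξ y • (vec m v * vec m y) + (Uc q' ξ y * ((ip v y : ℝ) : ℂ)) • (vec m ξ * vec m y))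

variable {κ κ' : ℝ} {p q p' q' r s r' s' : ℝ → ℝ → ℝ}

lemma Eig.dL (he : Eig m κ p q p' q') (j l : Fin m) (h : j < l) (θ : ℝ) (ξ x : Fin m → ℝ) :
    HasDerivAt (fun θ => U p q (rot j l θ ξ) x)
      (UL p' q q' (rot j l θ ξ) x (tang j l (rot j l θ ξ))) θ := by
  simp only [U_eq]
  have h1 := (Uc_deriv he.dp j l h θ ξ x).smul_const (1 : Cl m)
  have h2 := (Uc_deriv he.dq j l h θ ξ x).smul
    (hasDerivAt_mul (hasDerivAt_const θ (vec m x)) (vec_deriv (rot_hasDerivAt j l h θ ξ)))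
  have h3 := h1.add h2
  simp only [zero_mul, zero_add] at h3
  exact h3

lemma Eig.dR (he : Eig m κ p q p' q') (j l : Fin m) (h : j < l) (θ : ℝ) (ξ y : Fin m → ℝ) :
    HasDerivAt (fun θ => U p q y (rot j l θ ξ))
      (UR p' q q' y (rot j l θ ξ) (tang j l (rot j l θ ξ))) θ := by
  simp only [U_eq]
  simp only [Uc_symm _ y]
  have h1 := (Uc_deriv he.dp j l h θ ξ y).smul_const (1 : Cl m)
  have h2 := (Uc_deriv he.dq j l h θ ξ y).smul
    (hasDerivAt_mul (vec_deriv (rot_hasDerivAt j l h θ ξ)) (hasDerivAt_const θ (vec m y)))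
  have h3 := h1.add h2
  simp only [mul_zero, add_zero] at h3
  exact h3

lemma sumlt_mul_left (a : Cl m) (X : Fin m → Fin m → Cl m) :
    sumlt (fun j l => a * X j l) = a * sumlt X := (sumlt_map (AddMonoidHom.mulLeft a) X).symm
lemma sumlt_mul_right (a : Cl m) (X : Fin m → Fin m → Cl m) :
    sumlt (fun j l => X j l * a) = sumlt X * a := (sumlt_map (AddMonoidHom.mulRight a) X).symm
lemma sumlt_smul (c : ℂ) (X : Fin m → Fin m → Cl m) :
    sumlt (fun j l => c • X j l) = c • sumlt X :=
  (sumlt_map (DistribSMul.toAddMonoidHom (Cl m) c) X).symm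

lemma Eig.sumL (he : Eig m κ p q p' q') (ξ x : Fin m → ℝ) :
    sumlt (fun j l => UL p' q q' ξ x (tang j l ξ) * (e m j * e m l)) = (κ : ℂ) • U p q ξ x := by
  have : sumlt (fun j l => UL p' q q' ξ x (tang j l ξ) * (e m j * e m l))
     = sumlt (fun j l => Uc p' ξ x • (((ip (tang j l ξ) x : ℝ) : ℂ) • (e m j * e m l))
        + (Uc q ξ x • (vec m x * (vec m (tang j l ξ) * (e m j * e m l)))
        + Uc q' ξ x • ((vec m x * vec m ξ) * (((ip (tang j l ξ) x : ℝ) : ℂ) • (e m j * e m l))))) := by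
    refine sumlt_congr fun j l _ => ?_
    rw [UL, add_mul, add_mul, smul_mul_assoc, one_mul, smul_mul_assoc, smul_mul_assoc, mul_assoc,
      mul_smul_comm, smul_smul, smul_smul]
  rw [this, sumlt_add, sumlt_add, sumlt_smul, sumlt_smul, sumlt_smul, sumlt_mul_left, sumlt_mul_left,
    sum_ip_tang, sum_tang_right, vec_wedge_right, mul_smul_comm]
  have hw : wedge m ξ x = - (vec m x * vec m ξ) - ((ip ξ x : ℝ) : ℂ) • (1 : Cl m) := by
    rw [← neg_neg (wedge m ξ x), ← wedge_swap, wedge_eq, ip_comm x ξ]; abel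
  rw [hw, U_eq]
  have e1 := congrArg (fun r : ℝ => (r : ℂ)) (he.e1 (ip ξ x) (ip ξ ξ * ip x x))
  have e2 := congrArg (fun r : ℝ => (r : ℂ)) (he.e2 (ip ξ x) (ip ξ ξ * ip x x))
  push_cast at e1 e2
  unfold Uc
  push_cast
  linear_combination (norm := module) e1 • (1 : Cl m) + e2 • (vec m x * vec m ξ)

lemma Eig.sumR (he : Eig m κ p q p' q') (ξ y : Fin m → ℝ) :
    sumlt (fun j l => (e m j * e m l) * UR p' q q' y ξ (tang j l ξ)) = - ((κ : ℂ) • U p q y ξ) := by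
  have : sumlt (fun j l => (e m j * e m l) * UR p' q q' y ξ (tang j l ξ))
     = sumlt (fun j l => Uc p' ξ y • (((ip (tang j l ξ) y : ℝ) : ℂ) • (e m j * e m l))
        + (Uc q ξ y • (((e m j * e m l) * vec m (tang j l ξ)) * vec m y)
        + Uc q' ξ y • ((((ip (tang j l ξ) y : ℝ) : ℂ) • (e m j * e m l)) * (vec m ξ * vec m y)))) := by
    refine sumlt_congr fun j l _ => ?_
    rw [UR, mul_add, mul_add, mul_smul_comm, mul_one, mul_smul_comm, mul_smul_comm, ← mul_assoc (e m j * e m l),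
      smul_mul_assoc, smul_smul, smul_smul]
  rw [this, sumlt_add, sumlt_add, sumlt_smul, sumlt_smul, sumlt_smul, sumlt_mul_right, sumlt_mul_right,
    sum_ip_tang, sum_tang_left, vec_wedge_left, neg_mul, smul_mul_assoc]
  rw [wedge_eq, U_eq, Uc_symm p y, Uc_symm q y]
  have e1 := congrArg (fun r : ℝ => (r : ℂ)) (he.e1 (ip ξ y) (ip ξ ξ * ip y y))
  have e2 := congrArg (fun r : ℝ => (r : ℂ)) (he.e2 (ip ξ y) (ip ξ ξ * ip y y))
  push_cast at e1 e2
  unfold Uc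
  push_cast
  linear_combination (norm := module) (-e1) • (1 : Cl m) - e2 • (vec m ξ * vec m y)

lemma continuous_tang (j l : Fin m) : Continuous (tang j l) := by
  refine continuous_pi fun i => ?_
  unfold tang
  split_ifs <;> fun_prop

lemma Eig.cUL (he : Eig m κ p q p' q') (x : Fin m → ℝ) (j l : Fin m) :
    Continuous (fun ξ => UL p' q q' ξ x (tang j l ξ)) := by
  unfold UL
  have h1 := continuous_Uc he.cp' continuous_id (continuous_const (y := x))
  have h2 := continuous_Uc he.cq continuous_id (continuous_const (y := x))
  have h3 := continuous_Uc he.cq' continuous_id (continuous_const (y := x))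
  have h4 := Complex.continuous_ofReal.comp (continuous_ip (continuous_tang j l) (continuous_const (y := x)))
  exact ((h1.mul h4).smul continuous_const).add ((h2.smul (continuous_mul' continuous_const
    (continuous_vec.comp (continuous_tang j l)))).add ((h3.mul h4).smul (continuous_mul' continuous_const
    continuous_vec)))

lemma Eig.cUR (he : Eig m κ p q p' q') (x : Fin m → ℝ) (j l : Fin m) :
    Continuous (fun ξ => UR p' q q' x ξ (tang j l ξ)) := by
  unfold UR
  have h1 := continuous_Uc he.cp' continuous_id (continuous_const (y := x))
  have h2 := continuous_Uc he.cq continuous_id (continuous_const (y := x))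
  have h3 := continuous_Uc he.cq' continuous_id (continuous_const (y := x))
  have h4 := Complex.continuous_ofReal.comp (continuous_ip (continuous_tang j l) (continuous_const (y := x)))
  exact ((h1.mul h4).smul continuous_const).add ((h2.smul (continuous_mul'
    (continuous_vec.comp (continuous_tang j l)) continuous_const)).add ((h3.mul h4).smul (continuous_mul'
    continuous_vec continuous_const)))

lemma Eig.cL (he : Eig m κ p q p' q') (x : Fin m → ℝ) : Continuous (fun ξ => U p q ξ x) :=
  continuous_U he.cp he.cq continuous_id continuous_const
lemma Eig.cR (he : Eig m κ p q p' q') (x : Fin m → ℝ) : Continuous (fun ξ => U p q x ξ) :=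
  continuous_U he.cp he.cq continuous_const continuous_id

lemma Wt.int_cont {R : ℝ} {h : (Fin m → ℝ) → ℂ} (hh : Wt R h) {Φ : (Fin m → ℝ) → Cl m} (hΦ : Continuous Φ) :
    Integrable (fun ξ => h ξ • Φ ξ) := by
  obtain ⟨M, hM⟩ := bdd_of_cont hΦ R
  exact hh.integrable_smul hΦ.aestronglyMeasurable hM

/-- orthogonality -/
lemma Wt.orth {R : ℝ} {h : (Fin m → ℝ) → ℂ} (hh : Wt R h) (h1 : Eig m κ p q p' q') (h2 : Eig m κ' r s r' s')
    (hne : κ ≠ κ') (x y : Fin m → ℝ) :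
    ∫ ξ, h ξ • (U p q ξ x * U r s y ξ) = 0 := by
  set Ψ : Fin m → Fin m → (Fin m → ℝ) → Cl m := fun j l ξ =>
    (UL p' q q' ξ x (tang j l ξ) * (e m j * e m l)) * U r s y ξ
     + (U p q ξ x * (e m j * e m l)) * UR r' s s' y ξ (tang j l ξ) with hΨ
  have hcont : ∀ j l, Continuous (Ψ j l) := fun j l =>
    (continuous_mul' (continuous_mul' (h1.cUL x j l) continuous_const) (h2.cR y)).add
      (continuous_mul' (continuous_mul' (h1.cL x) continuous_const) (h2.cUR y j l))
  have hz : ∀ j l, j < l → ∫ ξ, h ξ • Ψ j l ξ = 0 := by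
    intro j l hjl
    refine hh.ibp (Φ := fun ξ => U p q ξ x * (e m j * e m l) * U r s y ξ)
      (continuous_mul' (continuous_mul' (h1.cL x) continuous_const) (h2.cR y)) (hcont j l) j l hjl ?_
    intro θ ξ
    have := hasDerivAt_mul (hasDerivAt_mul (h1.dL j l hjl θ ξ x) (hasDerivAt_const θ (e m j * e m l)))
      (h2.dR j l hjl θ ξ y)
    simp only [mul_zero, add_zero] at this
    exact this
  have hsum : ∀ ξ, sumlt (fun j l => Ψ j l ξ) = ((κ - κ' : ℝ) : ℂ) • (U p q ξ x * U r s y ξ) := by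
    intro ξ
    simp only [hΨ]
    rw [sumlt_add, sumlt_mul_right, h1.sumL]
    simp only [mul_assoc (U p q ξ x)]
    rw [sumlt_mul_left, h2.sumR, mul_neg, mul_smul_comm, smul_mul_assoc]
    push_cast; module
  have h0 : ∫ ξ, h ξ • sumlt (fun j l => Ψ j l ξ) = 0 := by
    have : ∀ ξ, h ξ • sumlt (fun j l => Ψ j l ξ)
        = ∑ j : Fin m, ∑ l : Fin m, if j < l then h ξ • Ψ j l ξ else 0 := by
      intro ξ; rw [← sumlt_smul]; rfl
    simp only [this]
    have hI : ∀ j l, Integrable (fun ξ => if j < l then h ξ • Ψ j l ξ else 0) := by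
      intro j l
      split_ifs
      · exact hh.int_cont (hcont j l)
      · exact integrable_zero _ _ _
    rw [integral_finsetSum _ fun j _ => integrable_finsetSum _ fun l _ => hI j l]
    refine Finset.sum_eq_zero fun j _ => ?_
    rw [integral_finsetSum _ fun l _ => hI j l]
    refine Finset.sum_eq_zero fun l _ => ?_
    split_ifs with hjl
    · exact hz j l hjl
    · simp
  simp only [hsum, smul_comm (h _)] at h0
  rw [integral_smul] at h0
  have hc : ((κ - κ' : ℝ) : ℂ) ≠ 0 := by
    rw [Complex.ofReal_ne_zero]; exact sub_ne_zero.2 hne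
  exact (smul_eq_zero.1 h0).resolve_left hc

end RotPart

section PolyPart

def EE (μ : ℝ) : ℕ → ℝ → ℝ → ℝ
  | 0, _, _ => 0
  | 1, _, _ => 0
  | 2, _, _ => 1
  | (k+3), s, t => (2 * ((k:ℝ) + μ) * s * EE μ (k+2) s t - ((k:ℝ) - 1 + 2 * μ) * t * EE μ (k+1) s t) / ((k:ℝ) + 1)

def dE (μ : ℝ) : ℕ → ℝ → ℝ → ℝ
  | 0, _, _ => 0
  | 1, _, _ => 0
  | 2, _, _ => 0
  | (k+3), s, t => (2 * ((k:ℝ) + μ) * (EE μ (k+2) s t + s * dE μ (k+2) s t)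
      - ((k:ℝ) - 1 + 2 * μ) * t * dE μ (k+1) s t) / ((k:ℝ) + 1)

lemma EE_rec (μ : ℝ) (k : ℕ) (s t : ℝ) : ((k:ℝ) + 1) * EE μ (k+3) s t
    = 2 * ((k:ℝ) + μ) * s * EE μ (k+2) s t - ((k:ℝ) - 1 + 2 * μ) * t * EE μ (k+1) s t := by
  rw [EE]; field_simp

lemma dE_rec (μ : ℝ) (k : ℕ) (s t : ℝ) : ((k:ℝ) + 1) * dE μ (k+3) s t
    = 2 * ((k:ℝ) + μ) * (EE μ (k+2) s t + s * dE μ (k+2) s t)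
      - ((k:ℝ) - 1 + 2 * μ) * t * dE μ (k+1) s t := by
  rw [dE]; field_simp

lemma EE_deriv (μ : ℝ) (s t : ℝ) : ∀ k, HasDerivAt (fun s => EE μ k s t) (dE μ k s t) s
  | 0 => by simp only [EE, dE]; exact hasDerivAt_const _ _
  | 1 => by simp only [EE, dE]; exact hasDerivAt_const _ _
  | 2 => by simp only [EE, dE]; exact hasDerivAt_const _ _
  | (k+3) => by
    simp only [EE, dE]
    have h2 := EE_deriv μ s t (k+2)
    have h1 := EE_deriv μ s t (k+1)
    have := ((((hasDerivAt_id s).const_mul (2 * ((k:ℝ) + μ))).mul h2).sub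
      (h1.const_mul (((k:ℝ) - 1 + 2 * μ) * t))).div_const ((k:ℝ) + 1)
    refine this.congr_deriv ?_
    simp only [id]; ring

lemma EE_cont (μ : ℝ) : ∀ k, Continuous (fun z : ℝ × ℝ => EE μ k z.1 z.2)
  | 0 => by simp only [EE]; exact continuous_const
  | 1 => by simp only [EE]; exact continuous_const
  | 2 => by simp only [EE]; exact continuous_const
  | (k+3) => by
    simp only [EE]
    have h2 := EE_cont μ (k+2)
    have h1 := EE_cont μ (k+1)
    fun_prop

lemma dE_cont (μ : ℝ) : ∀ k, Continuous (fun z : ℝ × ℝ => dE μ k z.1 z.2)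
  | 0 => by simp only [dE]; exact continuous_const
  | 1 => by simp only [dE]; exact continuous_const
  | 2 => by simp only [dE]; exact continuous_const
  | (k+3) => by
    simp only [dE]
    have h3 := EE_cont μ (k+2)
    have h2 := dE_cont μ (k+2)
    have h1 := dE_cont μ (k+1)
    fun_prop

lemma EE_rel (μ s t : ℝ) : ∀ n : ℕ, (s * dE μ (n+1) s t - t * dE μ n s t = ((n:ℝ) - 1) * EE μ (n+1) s t) ∧
    (dE μ (n+1) s t - s * dE μ n s t = ((n:ℝ) + 2 * μ - 2) * EE μ n s t)
  | 0 => by simp [EE, dE]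
  | 1 => by simp [EE, dE]
  | (k+2) => by
    obtain ⟨r1, r2⟩ := EE_rel μ s t (k+1)
    have hr := EE_rec μ k s t
    have hd := dE_rec μ k s t
    have hk : ((k:ℝ) + 1) ≠ 0 := by positivity
    push_cast at r1 r2 ⊢
    have h2 : dE μ (k+3) s t - s * dE μ (k+2) s t = ((k:ℝ) + 2 * μ) * EE μ (k+2) s t := by
      apply mul_left_cancel₀ hk
      linear_combination hd + ((k:ℝ) - 1 + 2 * μ) * r1
    refine ⟨?_, ?_⟩
    · change s * dE μ (k+3) s t - t * dE μ (k+2) s t = _ * EE μ (k+3) s t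
      linear_combination s * h2 + s * r1 - t * r2 - hr
    · change dE μ (k+3) s t - s * dE μ (k+2) s t = _
      linear_combination h2

lemma eigP (n k : ℕ) (hm : (m:ℝ) = 2 * ((n:ℝ) + 1)) :
    Eig m (-(k:ℝ)) (EE (n+1) (k+2)) (EE (n+1) (k+1)) (dE (n+1) (k+2)) (dE (n+1) (k+1)) where
  cp := EE_cont _ _
  cq := EE_cont _ _
  cp' := dE_cont _ _
  cq' := dE_cont _ _
  dp := fun s t => EE_deriv _ s t _
  dq := fun s t => EE_deriv _ s t _
  e1 := fun s t => by
    have := (EE_rel ((n:ℝ)+1) s t (k+1)).1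
    push_cast at this
    linear_combination -this
  e2 := fun s t => by
    have := (EE_rel ((n:ℝ)+1) s t (k+1)).2
    push_cast at this
    rw [hm]
    linear_combination -this

def QQ (μ : ℝ) (k : ℕ) (s t : ℝ) : ℝ := - (t * EE μ k s t)
def QQ' (μ : ℝ) (k : ℕ) (s t : ℝ) : ℝ := - EE μ (k+1) s t

lemma eigQ (n k : ℕ) (hm : (m:ℝ) = 2 * ((n:ℝ) + 1)) :
    Eig m ((k:ℝ) + 2 * n) (QQ (n+1) k) (QQ' (n+1) k)
      (fun s t => - (t * dE (n+1) k s t)) (fun s t => - dE (n+1) (k+1) s t) where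
  cp := by have := EE_cont (n+1) k; unfold QQ; fun_prop
  cq := by have := EE_cont (n+1) (k+1); unfold QQ'; fun_prop
  cp' := by have := dE_cont (n+1) k; fun_prop
  cq' := by have := dE_cont (n+1) (k+1); fun_prop
  dp := fun s t => ((EE_deriv (n+1) s t k).const_mul t).neg
  dq := fun s t => (EE_deriv (n+1) s t (k+1)).neg
  e1 := fun s t => by
    have := (EE_rel ((n:ℝ)+1) s t k).2
    unfold QQ
    linear_combination -t * this
  e2 := fun s t => by
    have := (EE_rel ((n:ℝ)+1) s t k).1
    rw [hm]
    unfold QQ'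
    linear_combination -this

lemma geg_E (μ z w : ℝ) : ∀ k, z ^ k * geg μ k w = EE μ (k+2) (z * w) (z ^ 2)
  | 0 => by simp [geg, EE]
  | 1 => by simp [geg, EE]; ring
  | (k+2) => by
    have h1 := geg_E μ z w (k+1)
    have h0 := geg_E μ z w k
    have hr := EE_rec μ (k+1) (z*w) (z^2)
    have hk : ((k:ℝ) + 2) ≠ 0 := by positivity
    apply mul_left_cancel₀ hk
    push_cast at hr
    rw [geg]
    have e : ((k:ℝ) + 2) * (z ^ (k+2) * ((2 * ((k : ℝ) + 1 + μ) * w * geg μ (k+1) w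
      - ((k : ℝ) + 2 * μ) * geg μ k w) / ((k : ℝ) + 2)))
      = 2 * ((k : ℝ) + 1 + μ) * (z * w) * (z ^ (k+1) * geg μ (k+1) w) - ((k : ℝ) + 2 * μ) * z ^ 2 * (z ^ k * geg μ k w) := by
      field_simp; ring
    rw [e, h1, h0]
    change _ = ((k:ℝ) + 2) * EE μ (k+1+3) (z * w) (z^2)
    linear_combination -hr

lemma geg_A (l z w : ℝ) : ∀ k, z ^ k * geg l k w = EE (l+1) (k+2) (z * w) (z ^ 2)
      - 2 * (z * w) * EE (l+1) (k+1) (z * w) (z ^ 2) + z ^ 2 * EE (l+1) k (z * w) (z ^ 2)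
  | 0 => by simp [geg, EE]
  | 1 => by simp [geg, EE]; ring
  | (k+2) => by
    have h1 := geg_A l z w (k+1)
    have h0 := geg_A l z w k
    have hr2 := EE_rec (l+1) (k+1) (z*w) (z^2)
    have hr1 := EE_rec (l+1) k (z*w) (z^2)
    have hr0 : (k:ℝ) * EE (l+1) (k+2) (z*w) (z^2)
      = 2 * ((k:ℝ) + l) * (z*w) * EE (l+1) (k+1) (z*w) (z^2) - ((k:ℝ) + 2 * l) * z^2 * EE (l+1) k (z*w) (z^2) := by
      rcases k with _ | k
      · simp [EE]
      · have := EE_rec (l+1) k (z*w) (z^2)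
        push_cast
        linear_combination this
    have hk : ((k:ℝ) + 2) ≠ 0 := by positivity
    apply mul_left_cancel₀ hk
    push_cast at hr2
    rw [geg]
    have e : ((k:ℝ) + 2) * (z ^ (k+2) * ((2 * ((k : ℝ) + 1 + l) * w * geg l (k+1) w
      - ((k : ℝ) + 2 * l) * geg l k w) / ((k : ℝ) + 2)))
      = 2 * ((k : ℝ) + 1 + l) * (z * w) * (z ^ (k+1) * geg l (k+1) w) - ((k : ℝ) + 2 * l) * z ^ 2 * (z ^ k * geg l k w) := by
      field_simp; ring
    rw [e, h1, h0]
    simp only [add_assoc, Nat.reduceAdd] at hr2 hr1 hr0 ⊢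
    linear_combination -hr2 + 2 * (z*w) * hr1 - z^2 * hr0

lemma EE_bound (μ s t Z : ℝ) (hμ : 0 ≤ μ) (hZ : 1 ≤ Z) (hs : |s| ≤ Z) (ht : |t| ≤ Z ^ 2) :
    ∀ k, |EE μ k s t| ≤ ((4 + 4 * μ) * Z) ^ k
  | 0 => by simp [EE]
  | 1 => by simp only [EE, abs_zero]; positivity
  | 2 => by
    simp only [EE, abs_one]
    exact one_le_pow₀ (by nlinarith)
  | (k+3) => by
    have h2 := EE_bound μ s t Z hμ hZ hs ht (k+2)
    have h1 := EE_bound μ s t Z hμ hZ hs ht (k+1)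
    have hk : (0:ℝ) < (k:ℝ) + 1 := by positivity
    have hr := EE_rec μ k s t
    set c := (4 + 4 * μ) with hc
    have hk0 : (0:ℝ) ≤ k := by positivity
    have ha : |((k:ℝ) + 1) * EE μ (k+3) s t| ≤ (2 * ((k:ℝ) + μ)) * Z * (c * Z) ^ (k+2) + ((k:ℝ) + 1 + 2 * μ) * Z ^ 2 * (c * Z) ^ (k+1) := by
      rw [hr]
      refine (abs_sub _ _).trans ?_
      rw [abs_mul (2*((k:ℝ)+μ)*s), abs_mul (2*((k:ℝ)+μ)), abs_mul (((k:ℝ)-1+2*μ)*t), abs_mul ((k:ℝ)-1+2*μ)]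
      have a1 : |2 * ((k:ℝ) + μ)| = 2 * ((k:ℝ) + μ) := abs_of_nonneg (by positivity)
      have a2 : |(k:ℝ) - 1 + 2 * μ| ≤ (k:ℝ) + 1 + 2 * μ := by
        rw [abs_le]; constructor <;> linarith
      rw [a1]
      gcongr
    rw [abs_mul, abs_of_pos hk] at ha
    have hb : (2 * ((k:ℝ) + μ)) * Z * (c * Z) ^ (k+2) + ((k:ℝ) + 1 + 2 * μ) * Z ^ 2 * (c * Z) ^ (k+1)
      = ((c*Z)^(k+1) * Z^2) * (2 * ((k:ℝ) + μ) * c + ((k:ℝ) + 1 + 2 * μ)) := by ring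
    have hb2 : (c*Z)^(k+3) = ((c*Z)^(k+1) * Z^2) * c ^ 2 := by ring
    rw [hb] at ha
    have hc0 : 0 ≤ c := by positivity
    have hpoly : (2 * ((k:ℝ) + μ) * c + ((k:ℝ) + 1 + 2 * μ)) ≤ ((k:ℝ) + 1) * c ^ 2 := by
      rw [hc]; nlinarith [mul_nonneg hk0 hμ, mul_nonneg hμ hμ, mul_nonneg hk0 (mul_nonneg hμ hμ)]
    have hpos : 0 ≤ (c*Z)^(k+1) * Z^2 := by positivity
    have := ha.trans (mul_le_mul_of_nonneg_left hpoly hpos)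
    rw [hb2]
    refine le_of_mul_le_mul_left (this.trans (le_of_eq ?_)) hk
    ring

/-! ### finite plane wave identity -/

def del (n N j : ℕ) : ℝ :=
  n.factorial * ((N:ℝ) - 2 * j + n + 1) / (2 ^ N * j.factorial * (N - j + n + 1).factorial)

lemma planeB (n : ℕ) (s t : ℝ) : ∀ N : ℕ,
    ∑ j ∈ Finset.range (N+1), del n N j * t ^ j * EE (n+1) (N + 2 - 2 * j) s t = s ^ N / N.factorial
  | 0 => by
    simp [del, EE, Nat.factorial_succ]
    field_simp
  | (N+1) => by
    have ih := planeB n s t N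
    set v : ℕ → ℝ := fun M => n.factorial * M / (2 ^ (N+1) * M.factorial * (N + 1 - M + n + 1).factorial)
      * t ^ M * ((N:ℝ) - 2 * M + 2 * n + 3) * EE (n+1) (N + 3 - 2 * M) s t with hv
    have key : ∀ M ≤ N + 1, ∑ j ∈ Finset.range M, s * (del n N j * t ^ j * EE (n+1) (N + 2 - 2 * j) s t)
        = ((N:ℝ)+1) * ∑ j ∈ Finset.range M, del n (N+1) j * t ^ j * EE (n+1) (N + 1 + 2 - 2 * j) s t + v M := by
      intro M
      induction M with
      | zero => intro _; simp [hv]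
      | succ M ihM =>
        intro hM
        rw [Finset.sum_range_succ, Finset.sum_range_succ, ihM (by omega), mul_add]
        suffices h : v M + s * (del n N M * t ^ M * EE (n+1) (N + 2 - 2 * M) s t)
          = ((N:ℝ)+1) * (del n (N+1) M * t ^ M * EE (n+1) (N + 1 + 2 - 2 * M) s t) + v (M+1) by
          linear_combination h
        obtain ⟨d, rfl⟩ : ∃ d, N = M + d := ⟨N - M, by omega⟩
        have e1 : M + d - M = d := by omega
        have e2 : M + d + 1 - M = d + 1 := by omega
        have e3 : M + d + 1 - (M + 1) = d := by omega
        have e4 : M + d + 3 - 2 * (M + 1) = M + d + 1 - 2 * M := by omega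
        have e5 : M + d + 1 + 2 - 2 * M = M + d + 3 - 2 * M := by omega
        have hrec : 2 * ((d:ℝ) - M + n + 1) * s * EE (n+1) (M + d + 2 - 2 * M) s t
          = ((d:ℝ) - M + 1) * EE (n+1) (M + d + 3 - 2 * M) s t
            + ((d:ℝ) - M + 2 * n + 1) * t * EE (n+1) (M + d + 1 - 2 * M) s t := by
          by_cases hle : M ≤ d
          · obtain ⟨k, rfl⟩ : ∃ k, d = M + k := ⟨d - M, by omega⟩
            have := EE_rec ((n:ℝ)+1) k s t
            have f1 : M + (M + k) + 2 - 2 * M = k + 2 := by omega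
            have f2 : M + (M + k) + 3 - 2 * M = k + 3 := by omega
            have f3 : M + (M + k) + 1 - 2 * M = k + 1 := by omega
            rw [f1, f2, f3]
            push_cast
            linear_combination -this
          · have f3 : M + d + 1 - 2 * M = 0 := by omega
            rw [f3]
            have hE2 : EE ((n:ℝ)+1) (M + d + 2 - 2 * M) s t = 0 := by
              have : M + d + 2 - 2 * M = 0 ∨ M + d + 2 - 2 * M = 1 := by omega
              rcases this with h | h <;> rw [h] <;> simp [EE]
            rw [hE2]
            by_cases hd : M = d + 1
            · subst hd; simp [EE]
            · have : M + d + 3 - 2 * M = 0 ∨ M + d + 3 - 2 * M = 1 := by omega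
              rcases this with h | h <;> rw [h] <;> simp [EE]
        simp only [hv, del, e1, e2, e3, e4, e5]
        rw [show d + 1 + n + 1 = (d + n + 1) + 1 by ring, Nat.factorial_succ (d + n + 1), Nat.factorial_succ M]
        have hf1 : (M.factorial : ℝ) ≠ 0 := by positivity
        have hf2 : ((d+n+1).factorial : ℝ) ≠ 0 := by positivity
        have hf3 : (d:ℝ) + n + 1 + 1 ≠ 0 := by positivity
        have hf4 : (M:ℝ) + 1 ≠ 0 := by positivity
        push_cast
        field_simp
        linear_combination (t^M * 2^M * 2^d * ((d:ℝ) + n + 2)) * hrec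
    have hlast : v (N+1) = 0 := by
      have : N + 3 - 2 * (N + 1) = 0 ∨ N + 3 - 2 * (N + 1) = 1 := by omega
      simp only [hv]
      rcases this with h | h <;> rw [h] <;> simp [EE]
    have hlast2 : EE ((n:ℝ)+1) (N + 1 + 2 - 2 * (N + 1)) s t = 0 := by
      have : N + 1 + 2 - 2 * (N + 1) = 0 ∨ N + 1 + 2 - 2 * (N + 1) = 1 := by omega
      rcases this with h | h <;> rw [h] <;> simp [EE]
    have hk := key (N+1) le_rfl
    rw [hlast, ← Finset.mul_sum, ih] at hk
    rw [Finset.sum_range_succ, hlast2, Nat.factorial_succ]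
    have hN : (N:ℝ) + 1 ≠ 0 := by positivity
    have hf : (N.factorial : ℝ) ≠ 0 := by positivity
    apply mul_left_cancel₀ hN
    push_cast
    rw [mul_zero, add_zero]
    rw [add_zero] at hk
    rw [← hk]
    field_simp
    ring

def gam (n N j : ℕ) : ℝ :=
  n.factorial / (2 ^ N * j.factorial * (N - j + n).factorial)

lemma planeA (n : ℕ) (s t : ℝ) (N : ℕ) :
    ∑ j ∈ Finset.range (N+1), gam n N j * t ^ j * (EE (n+1) (N + 2 - 2 * j) s t - t * EE (n+1) (N - 2 * j) s t)
      = s ^ N / N.factorial := by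
  rw [← planeB n s t N]
  set v : ℕ → ℝ := fun M => n.factorial * M / (2 ^ N * M.factorial * (N + 1 - M + n).factorial)
      * t ^ M * EE (n+1) (N + 2 - 2 * M) s t with hv
  have key : ∀ M ≤ N + 1, ∑ j ∈ Finset.range M,
      gam n N j * t ^ j * (EE (n+1) (N + 2 - 2 * j) s t - t * EE (n+1) (N - 2 * j) s t)
        = ∑ j ∈ Finset.range M, del n N j * t ^ j * EE (n+1) (N + 2 - 2 * j) s t - v M := by
    intro M
    induction M with
    | zero => intro _; simp [hv]
    | succ M ihM =>
      intro hM
      rw [Finset.sum_range_succ, Finset.sum_range_succ, ihM (by omega)]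
      obtain ⟨d, rfl⟩ : ∃ d, N = M + d := ⟨N - M, by omega⟩
      have e1 : M + d - M = d := by omega
      have e2 : M + d + 1 - M = d + 1 := by omega
      have e3 : M + d + 1 - (M + 1) = d := by omega
      have e4 : M + d + 2 - 2 * (M + 1) = M + d - 2 * M := by omega
      simp only [hv, del, gam, e1, e2, e3, e4]
      rw [show d + 1 + n = (d + n) + 1 by ring, Nat.factorial_succ (d + n), Nat.factorial_succ M]
      have hf1 : (M.factorial : ℝ) ≠ 0 := by positivity
      have hf2 : ((d+n).factorial : ℝ) ≠ 0 := by positivity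
      have hf3 : (d:ℝ) + n + 1 ≠ 0 := by positivity
      have hf4 : (M:ℝ) + 1 ≠ 0 := by positivity
      push_cast
      field_simp
      ring
  rw [key (N+1) le_rfl]
  have : N + 2 - 2 * (N + 1) = 0 := by omega
  simp only [hv, this, EE]
  simp

end PolyPart

section SeriesPart

def ga (n k j : ℕ) (t : ℝ) : ℝ :=
  (-1) ^ j * t ^ j * n.factorial / (4 ^ j * 2 ^ k * j.factorial * (j + k + n).factorial)

def aa (n k : ℕ) (t : ℝ) : ℝ := ∑' j, ga n k j t

lemma ga_gam (n k j : ℕ) (t : ℝ) : ga n k j t = (-1) ^ j * (gam n (k + 2 * j) j * t ^ j) := by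
  have : k + 2 * j - j + n = j + k + n := by omega
  rw [ga, gam, this, pow_add, pow_mul]
  norm_num
  field_simp

lemma ga_bound (n k j : ℕ) (t : ℝ) : |ga n k j t| ≤ |t| ^ j / j.factorial / k.factorial := by
  have h1 : n.factorial * k.factorial ≤ (j + k + n).factorial := by
    have := Nat.le_of_dvd (Nat.factorial_pos _) (Nat.factorial_mul_factorial_dvd_factorial_add n k)
    exact this.trans (Nat.factorial_le (by omega))
  have h1' : (n.factorial : ℝ) * k.factorial ≤ (j + k + n).factorial := by exact_mod_cast h1
  rw [ga, abs_div, abs_mul, abs_mul, abs_pow, abs_pow, abs_neg, abs_one, one_pow, one_mul,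
    Nat.abs_cast, abs_of_pos (show (0:ℝ) < 4 ^ j * 2 ^ k * j.factorial * (j + k + n).factorial by positivity)]
  rw [div_div, div_le_div_iff₀ (by positivity) (by positivity)]
  have h4 : (1:ℝ) ≤ 4 ^ j * 2 ^ k := by
    have a := one_le_pow₀ (M₀ := ℝ) (a := 4) (n := j) (by norm_num)
    have b := one_le_pow₀ (M₀ := ℝ) (a := 2) (n := k) (by norm_num)
    nlinarith
  calc |t| ^ j * n.factorial * (j.factorial * k.factorial)
      = |t| ^ j * j.factorial * (n.factorial * k.factorial) := by ring
    _ ≤ |t| ^ j * j.factorial * (j + k + n).factorial := by gcongr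
    _ = 1 * (|t| ^ j * j.factorial * (j + k + n).factorial) := by ring
    _ ≤ (4 ^ j * 2 ^ k) * (|t| ^ j * j.factorial * (j + k + n).factorial) := by gcongr
    _ = _ := by ring

lemma expR_hasSum (t : ℝ) : HasSum (fun j : ℕ => t ^ j / j.factorial) (Real.exp t) := by
  have := NormedSpace.expSeries_div_hasSum_exp t
  rwa [← Real.exp_eq_exp_ℝ] at this

lemma ga_summable (n k : ℕ) (t : ℝ) : Summable (fun j => ga n k j t) :=
  Summable.of_norm_bounded ((expR_hasSum |t|).summable.div_const _) (fun j => ga_bound n k j t)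

lemma aa_bound (n k : ℕ) (t : ℝ) : |aa n k t| ≤ Real.exp |t| / k.factorial := by
  rw [← Real.norm_eq_abs, aa]
  exact tsum_of_norm_bounded ((expR_hasSum |t|).div_const _) (fun j => ga_bound n k j t)

lemma aa_measurable (n k : ℕ) : Measurable (aa n k) := by
  unfold aa
  refine Measurable.tsum ?_
  intro j
  unfold ga
  fun_prop

lemma aa_bessel (n k : ℕ) (z : ℝ) :
    ((2:ℝ) ^ (n:ℝ) * Real.Gamma ((n:ℝ) + 1)) * besselJt ((k:ℝ) + n) z = aa n k (z ^ 2) := by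
  rw [besselJt, aa, ← tsum_mul_left]
  congr 1
  funext j
  rw [Real.Gamma_nat_eq_factorial, show (j:ℝ) + (k + n) + 1 = ((j + k + n : ℕ) : ℝ) + 1 by push_cast; ring,
    Real.Gamma_nat_eq_factorial, show (k:ℝ) + n = ((k + n : ℕ) : ℝ) by push_cast; ring,
    Real.rpow_natCast, Real.rpow_natCast, ga, pow_add, div_pow, pow_mul (2:ℝ), pow_mul z]
  norm_num
  field_simp

lemma summable_pow_fact (c : ℝ) : Summable (fun k : ℕ => c ^ k / k.factorial) := (expR_hasSum c).summable

lemma planeWave (n : ℕ) (s t : ℝ) (ω : ℂ) (hω : ω ^ 2 = -1) :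
    HasSum (fun k : ℕ => ω ^ k * ((aa n k t * (EE (n+1) (k+2) s t - t * EE (n+1) k s t) : ℝ) : ℂ))
      (Complex.exp (ω * s)) := by
  have hω1 : ‖ω‖ = 1 := by
    have : ‖ω‖ ^ 2 = 1 := by rw [← norm_pow, hω]; simp
    exact (pow_eq_one_iff_of_nonneg (norm_nonneg _) (by norm_num)).1 this
  set F : ℕ × ℕ → ℂ := fun p => ω ^ p.1 *
    ((ga n p.1 p.2 t * (EE (n+1) (p.1+2) s t - t * EE (n+1) p.1 s t) : ℝ) : ℂ) with hF
  set G : ℕ × ℕ → ℂ := fun p => ω ^ p.1 *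
    ((gam n p.1 p.2 * t ^ p.2 * (EE (n+1) (p.1 + 2 - 2 * p.2) s t - t * EE (n+1) (p.1 - 2 * p.2) s t) : ℝ) : ℂ) with hG
  obtain ⟨Z, hZ1, hZs, hZt⟩ : ∃ Z : ℝ, 1 ≤ Z ∧ |s| ≤ Z ∧ |t| ≤ Z ^ 2 := by
    refine ⟨1 + |s| + |t|, ?_, ?_, ?_⟩ <;> nlinarith [abs_nonneg s, abs_nonneg t, mul_nonneg (abs_nonneg s) (abs_nonneg t)]
  set c := (4 + 4 * ((n:ℝ)+1)) * Z with hc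
  have hc0 : 0 ≤ c := by positivity
  have hT : ∀ k, |EE (n+1) (k+2) s t - t * EE (n+1) k s t| ≤ (c ^ 2 + Z ^ 2) * c ^ k := by
    intro k
    have h1 := EE_bound (n+1) s t Z (by positivity) hZ1 hZs hZt (k+2)
    have h2 := EE_bound (n+1) s t Z (by positivity) hZ1 hZs hZt k
    refine (abs_sub _ _).trans ?_
    rw [abs_mul]
    calc _ ≤ c ^ (k+2) + Z ^ 2 * c ^ k := by gcongr
      _ = _ := by ring
  have hFs : Summable F := by
    refine Summable.of_norm_bounded (((summable_pow_fact c).mul_left (c ^ 2 + Z ^ 2)).mul_of_nonneg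
      (summable_pow_fact |t|) ?_ ?_) ?_
    · intro k; simp only [Pi.zero_apply]; positivity
    · intro k; simp only [Pi.zero_apply]; positivity
    · rintro ⟨k, j⟩
      simp only [hF, norm_mul, norm_pow, hω1, one_pow, one_mul, Complex.norm_real, Real.norm_eq_abs]
      calc |ga n k j t| * |EE (n+1) (k+2) s t - t * EE (n+1) k s t|
          ≤ (|t| ^ j / j.factorial / k.factorial) * ((c ^ 2 + Z ^ 2) * c ^ k) := by
            gcongr
            · exact ga_bound n k j t
            · exact hT k
        _ = _ := by ring
  have hinj : Function.Injective (fun p : ℕ × ℕ => (p.1 + 2 * p.2, p.2)) := by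
    rintro ⟨a, b⟩ ⟨c, d⟩ h
    simp only [Prod.mk.injEq] at h ⊢
    omega
  have hFG : F = G ∘ (fun p : ℕ × ℕ => (p.1 + 2 * p.2, p.2)) := by
    funext ⟨k, j⟩
    simp only [hF, hG, Function.comp]
    rw [show k + 2 * j + 2 - 2 * j = k + 2 by omega, show k + 2 * j - 2 * j = k by omega, ga_gam, pow_add, pow_mul, hω]
    push_cast
    ring
  have hG0 : ∀ p ∉ Set.range (fun p : ℕ × ℕ => (p.1 + 2 * p.2, p.2)), G p = 0 := by
    rintro ⟨N, j⟩ h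
    have hlt : N < 2 * j := by
      by_contra hcon
      exact h ⟨(N - 2 * j, j), by simp only [Prod.mk.injEq, and_true]; omega⟩
    simp only [hG]
    rw [show N - 2 * j = 0 by omega]
    have : N + 2 - 2 * j = 0 ∨ N + 2 - 2 * j = 1 := by omega
    rcases this with h | h <;> rw [h] <;> simp [EE]
  have hsum := hFs.hasSum
  have h1 := hsum.prod_fiberwise (g := fun k : ℕ => ω ^ k * ((aa n k t * (EE (n+1) (k+2) s t - t * EE (n+1) k s t) : ℝ) : ℂ)) (by
    intro k
    simp only [hF]
    refine HasSum.mul_left _ ?_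
    exact_mod_cast (ga_summable n k t).hasSum.mul_right _)
  have hGsum : HasSum G (∑' p, F p) := by
    rw [← hinj.hasSum_iff hG0, ← hFG]; exact hsum
  have h2 := hGsum.prod_fiberwise (g := fun N : ℕ => (ω * s) ^ N / N.factorial) (by
    intro N
    have : HasSum (fun j => G (N, j)) (∑ j ∈ Finset.range (N+1), G (N, j)) := hasSum_sum_of_ne_finset_zero (by
      intro j hj
      apply hG0
      rintro ⟨⟨a, b⟩, hab⟩
      simp only [Prod.mk.injEq] at hab
      simp only [Finset.mem_range] at hj
      omega)
    convert this using 1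
    simp only [hG]
    rw [← Finset.mul_sum, ← Complex.ofReal_sum, planeA]
    push_cast
    ring)
  have h3 := NormedSpace.expSeries_div_hasSum_exp (ω * (s:ℂ))
  rw [← Complex.exp_eq_exp_ℂ] at h3
  rw [← h2.unique h3]
  exact h1

end SeriesPart

section VPart

attribute [local instance] clRing clTower clComm clNS

lemma ip_cs (x y : Fin m → ℝ) : ip x y ^ 2 ≤ ip x x * ip y y := by
  have := Finset.sum_mul_sq_le_sq_mul_sq Finset.univ x y
  simpa only [ip, pow_two] using this

lemma nrm_mul_sq (x y : Fin m → ℝ) : (nrm x * nrm y) ^ 2 = ip x x * ip y y := by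
  rw [mul_pow, nrm, nrm, Real.sq_sqrt (ip_self_nonneg x), Real.sq_sqrt (ip_self_nonneg y)]

lemma nrm_mul_div (x y : Fin m → ℝ) : (nrm x * nrm y) * (ip x y / (nrm x * nrm y)) = ip x y := by
  by_cases h : nrm x * nrm y = 0
  · have h1 := nrm_mul_sq x y
    have h2 := ip_cs x y
    rw [← h1, h] at h2
    have : ip x y = 0 := by nlinarith [sq_nonneg (ip x y)]
    rw [h, this]; simp
  · rw [mul_div_assoc', mul_div_cancel_left₀ _ h]

lemma aaE_summable (n i : ℕ) (s t : ℝ) : Summable (fun k => aa n k t * EE (n+1) (k+i) s t) := by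
  obtain ⟨Z, hZ1, hZs, hZt⟩ : ∃ Z : ℝ, 1 ≤ Z ∧ |s| ≤ Z ∧ |t| ≤ Z ^ 2 := by
    refine ⟨1 + |s| + |t|, ?_, ?_, ?_⟩ <;> nlinarith [abs_nonneg s, abs_nonneg t, mul_nonneg (abs_nonneg s) (abs_nonneg t)]
  set c := (4 + 4 * ((n:ℝ)+1)) * Z with hc
  refine Summable.of_norm_bounded ((summable_pow_fact c).mul_left (Real.exp |t| * c ^ i)) ?_
  intro k
  rw [norm_mul, Real.norm_eq_abs, Real.norm_eq_abs]
  calc _ ≤ (Real.exp |t| / k.factorial) * c ^ (k + i) := by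
        gcongr
        · exact aa_bound n k t
        · exact EE_bound (n+1) s t Z (by positivity) hZ1 hZs hZt (k+i)
    _ = _ := by ring

lemma gegT_E (n k : ℕ) (z w : ℝ) : z ^ k * gegT n k w = EE (n+1) (k+2) (z*w) (z^2) - z^2 * EE (n+1) k (z*w) (z^2) := by
  rw [gegT, mul_sub, geg_E]
  congr 1
  rcases k with _ | _ | k
  · simp [EE]
  · simp [EE]
  · rw [if_pos (by omega), show k + 1 + 1 - 2 = k by omega, ← geg_E]; ring

lemma gegC_E (n k : ℕ) (z w : ℝ) : z ^ (k-1) * (if 1 ≤ k then geg ((n:ℝ)+1) (k-1) w else 0) = EE (n+1) (k+1) (z*w) (z^2) := by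
  rcases k with _ | k
  · simp [EE]
  · rw [if_pos (by omega), show k + 1 - 1 = k by omega, geg_E]

lemma two_rpow_sub (n : ℕ) : (2:ℝ) ^ ((n:ℝ) - 1) = (2:ℝ)^(n:ℝ) / 2 := by
  rw [Real.rpow_sub (by norm_num), Real.rpow_one]

lemma bddmul {f : ℕ → ℝ} (hf : Summable f) {g : ℕ → ℂ} {M : ℝ} (hg : ∀ k, ‖g k‖ ≤ M) :
    Summable (fun k => g k * ((f k : ℝ) : ℂ)) := by
  refine Summable.of_norm_bounded (hf.abs.mul_left M) ?_
  intro k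
  rw [norm_mul, Complex.norm_real, Real.norm_eq_abs]
  exact mul_le_mul_of_nonneg_right (hg k) (abs_nonneg _)

lemma A_hasSum (n : ℕ) (u : ℂ) (z w : ℝ) :
    HasSum (fun k : ℕ => ((u + (-1)^k) / 2) * ((aa n k (z^2) * (EE (n+1) (k+2) (z*w) (z^2)
      - 2 * (z * w) * EE (n+1) (k+1) (z * w) (z ^ 2) + z^2 * EE (n+1) k (z*w) (z^2)) : ℝ) : ℂ)) (AfunR u n w z) := by
  have hs : Summable (fun k : ℕ => ((u + (-1)^k) / 2) * ((aa n k (z^2) * (EE (n+1) (k+2) (z*w) (z^2)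
      - 2 * (z * w) * EE (n+1) (k+1) (z * w) (z ^ 2) + z^2 * EE (n+1) k (z*w) (z^2)) : ℝ) : ℂ)) := by
    refine bddmul (M := (‖u‖ + 1) / 2) ?_ ?_
    · have h := ((aaE_summable n 2 (z*w) (z^2)).sub ((aaE_summable n 1 (z*w) (z^2)).mul_left (2 * (z*w)))).add
        ((aaE_summable n 0 (z*w) (z^2)).mul_left (z^2))
      refine h.congr ?_
      intro k; simp only [add_zero]; ring
    · intro k
      rw [norm_div]
      have : ‖u + (-1)^k‖ ≤ ‖u‖ + 1 := (norm_add_le _ _).trans (by simp)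
      simp only [Complex.norm_ofNat]
      linarith
  convert hs.hasSum using 1
  rw [AfunR, ← tsum_mul_left]
  congr 1; funext k
  rw [← geg_A, ← aa_bessel, two_rpow_sub]
  push_cast
  ring

lemma B_hasSum (n : ℕ) (u : ℂ) (z w : ℝ) :
    HasSum (fun k : ℕ => (-(u - (-1)^k) / 2) * ((aa n k (z^2) * (EE (n+1) (k+2) (z*w) (z^2)
      - z^2 * EE (n+1) k (z*w) (z^2)) : ℝ) : ℂ)) (BfunR u n w z) := by
  have hs : Summable (fun k : ℕ => (-(u - (-1)^k) / 2) * ((aa n k (z^2) * (EE (n+1) (k+2) (z*w) (z^2)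
      - z^2 * EE (n+1) k (z*w) (z^2)) : ℝ) : ℂ)) := by
    refine bddmul (M := (‖u‖ + 1) / 2) ?_ ?_
    · have h := ((aaE_summable n 2 (z*w) (z^2))).sub
        ((aaE_summable n 0 (z*w) (z^2)).mul_left (z^2))
      refine h.congr ?_
      intro k; simp only [add_zero]; ring
    · intro k
      rw [norm_div, norm_neg]
      have : ‖u - (-1)^k‖ ≤ ‖u‖ + 1 := (norm_sub_le _ _).trans (by simp)
      simp only [Complex.norm_ofNat]
      linarith
  convert hs.hasSum using 1
  rw [BfunR, ← tsum_mul_left]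
  congr 1; funext k
  rw [← gegT_E, ← aa_bessel, two_rpow_sub]
  push_cast
  ring

lemma C_hasSum (n : ℕ) (u : ℂ) (z w : ℝ) :
    HasSum (fun k : ℕ => (-(u + (-1)^k)) * ((aa n k (z^2) * EE (n+1) (k+1) (z*w) (z^2) : ℝ) : ℂ)) (CfunR u n w z) := by
  have hs : Summable (fun k : ℕ => (-(u + (-1)^k)) * ((aa n k (z^2) * EE (n+1) (k+1) (z*w) (z^2) : ℝ) : ℂ)) := by
    refine bddmul (M := (‖u‖ + 1)) (aaE_summable n 1 (z*w) (z^2)) ?_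
    intro k
    rw [norm_neg]
    exact (norm_add_le _ _).trans (by simp)
  convert hs.hasSum using 1
  rw [CfunR, ← tsum_mul_left]
  congr 1; funext k
  rw [← gegC_E, ← aa_bessel]
  push_cast
  ring

def PP (n k : ℕ) (x y : Fin m → ℝ) : Cl m := U (EE (n+1) (k+2)) (EE (n+1) (k+1)) x y
def QP (n k : ℕ) (x y : Fin m → ℝ) : Cl m := U (QQ (n+1) k) (QQ' (n+1) k) x y
def V (n : ℕ) (α β : ℂ) (k : ℕ) (x y : Fin m → ℝ) : Cl m :=
  ((aa n k (ip x x * ip y y) : ℝ) : ℂ) • (α • PP n k x y + β • QP n k x y)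

lemma V_exp (n : ℕ) (ω : ℂ) (hω : ω ^ 2 = -1) (x y : Fin m → ℝ) :
    HasSum (fun k => V n (ω^k) (ω^k) k x y) (Complex.exp (ω * (ip x y : ℝ)) • (1 : Cl m)) := by
  have h := (planeWave n (ip x y) (ip x x * ip y y) ω hω).smul_const (1 : Cl m)
  convert h using 1
  funext k
  rw [V, PP, QP, U_eq, U_eq]
  simp only [Uc, QQ, QQ']
  push_cast
  module

lemma V_K (n : ℕ) (hm : m = 2 * n + 2) (x y : Fin m → ℝ) :
    HasSum (fun k => V n ((-1)^k) ((-1)^n) k x y) (Kminus m x y) := by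
  have hu : (Complex.I ^ m) = -(-1)^n := by
    rw [hm, pow_add, pow_mul]; simp
  have hl : ((m:ℝ) - 2)/2 = n := by rw [hm]; push_cast; ring
  rw [Kminus, hl]
  have hz := nrm_mul_sq x y
  have hw := nrm_mul_div x y
  set z := nrm x * nrm y
  set w := ip x y / z
  have hA := A_hasSum n (Complex.I ^ m) z w
  have hB := B_hasSum n (Complex.I ^ m) z w
  have hC := C_hasSum n (Complex.I ^ m) z w
  have h := ((hA.add hB).smul_const (1 : Cl m)).add (hC.smul_const (wedge m x y))
  convert h using 1
  funext k
  rw [V, PP, QP, U_eq, U_eq, hu]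
  have hv : vec m y * vec m x = - wedge m x y - ((ip x y : ℝ) : ℂ) • (1 : Cl m) := by
    have := wedge_eq y x
    rw [wedge_swap x y, ip_comm y x] at this
    rw [this]; module
  rw [hv]
  simp only [Uc, QQ, QQ', hw, hz]
  push_cast
  module

lemma V_bound (n : ℕ) (x : Fin m → ℝ) (R : ℝ) : ∃ b : ℕ → ℝ, Summable b ∧ (∀ k, 0 ≤ b k) ∧
    ∀ (α β : ℂ), ‖α‖ ≤ 1 → ‖β‖ ≤ 1 → ∀ (k : ℕ) (ξ : Fin m → ℝ), ip ξ ξ ≤ R →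
      ‖V n α β k ξ x‖ ≤ b k ∧ ‖V n α β k x ξ‖ ≤ b k := by
  obtain ⟨M1, hM1⟩ := bdd_of_cont (Φ := fun ξ : Fin m → ℝ => vec m ξ * vec m x)
    (continuous_mul' continuous_vec continuous_const) R
  obtain ⟨M2, hM2⟩ := bdd_of_cont (Φ := fun ξ : Fin m → ℝ => vec m x * vec m ξ)
    (continuous_mul' continuous_const continuous_vec) R
  set M := |M1| + |M2| + ‖(1 : Cl m)‖ with hM
  set Z := 1 + |R| + ip x x with hZ
  have hx0 := ip_self_nonneg x
  have hZ1 : 1 ≤ Z := by rw [hZ]; have := abs_nonneg R; linarith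
  set c := (4 + 4 * ((n:ℝ)+1)) * Z with hc
  have hcZ : Z ≤ c := by rw [hc]; have : (0:ℝ) ≤ n := by positivity
                         nlinarith
  have hc1 : 1 ≤ c := hZ1.trans hcZ
  have hMn : 0 ≤ M := by positivity
  have gen : ∀ (α β : ℂ), ‖α‖ ≤ 1 → ‖β‖ ≤ 1 → ∀ (k : ℕ) (a b : Fin m → ℝ),
      |ip a b| ≤ Z → |ip a a * ip b b| ≤ Z ^ 2 → ‖vec m b * vec m a‖ ≤ M →
      ‖V n α β k a b‖ ≤ (Real.exp (Z^2) * (4 * M * c ^ 2)) * (c ^ k / k.factorial) := by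
    intro α β hα hβ k a b h1 h2 h3
    have hE := EE_bound (n+1) (ip a b) (ip a a * ip b b) Z (by positivity) hZ1 h1 h2
    rw [← hc] at hE
    have h1M : ‖(1 : Cl m)‖ ≤ M := by rw [hM]; have := abs_nonneg M1; have := abs_nonneg M2; linarith
    have hP : ‖PP n k a b‖ ≤ 2 * M * c ^ (k+2) := by
      rw [PP, U_eq]
      refine (norm_add_le _ _).trans ?_
      rw [norm_smul, norm_smul]
      simp only [Uc, Complex.norm_real, Real.norm_eq_abs]
      have e1 : |EE (n+1) (k+1) (ip a b) (ip a a * ip b b)| ≤ c ^ (k+2) :=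
        (hE (k+1)).trans (pow_le_pow_right₀ hc1 (by omega))
      calc _ ≤ c ^ (k+2) * M + c ^ (k+2) * M := by
            gcongr
            exact hE (k+2)
        _ = _ := by ring
    have hQ : ‖QP n k a b‖ ≤ 2 * M * c ^ (k+2) := by
      rw [QP, U_eq]
      refine (norm_add_le _ _).trans ?_
      rw [norm_smul, norm_smul]
      simp only [Uc, Complex.norm_real, Real.norm_eq_abs, QQ, QQ', abs_neg]
      have e1 : |EE (n+1) (k+1) (ip a b) (ip a a * ip b b)| ≤ c ^ (k+2) :=
        (hE (k+1)).trans (pow_le_pow_right₀ hc1 (by omega))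
      have e2 : |ip a a * ip b b * EE (n+1) k (ip a b) (ip a a * ip b b)| ≤ c ^ (k+2) := by
        rw [abs_mul]
        calc _ ≤ Z ^ 2 * c ^ k := by
              gcongr
              exact hE k
          _ ≤ c ^ 2 * c ^ k := by gcongr
          _ = _ := by ring
      calc _ ≤ c ^ (k+2) * M + c ^ (k+2) * M := by gcongr
        _ = _ := by ring
    rw [V, norm_smul, Complex.norm_real, Real.norm_eq_abs]
    have ha : |aa n k (ip a a * ip b b)| ≤ Real.exp (Z^2) / k.factorial :=
      (aa_bound _ _ _).trans (by gcongr)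
    have hs : ‖α • PP n k a b + β • QP n k a b‖ ≤ 4 * M * c ^ (k+2) := by
      refine (norm_add_le _ _).trans ?_
      rw [norm_smul, norm_smul]
      calc _ ≤ 1 * (2 * M * c ^ (k+2)) + 1 * (2 * M * c ^ (k+2)) := by gcongr
        _ = _ := by ring
    calc _ ≤ (Real.exp (Z^2) / k.factorial) * (4 * M * c ^ (k+2)) := by gcongr
      _ = _ := by ring
  refine ⟨fun k => (Real.exp (Z^2) * (4 * M * c ^ 2)) * (c ^ k / k.factorial),
    (summable_pow_fact c).mul_left _, fun k => by positivity, ?_⟩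
  intro α β hα hβ k ξ hξ
  have hξ0 := ip_self_nonneg ξ
  have hRR := le_abs_self R
  have ht : ip ξ ξ * ip x x ≤ Z ^ 2 := by
    calc ip ξ ξ * ip x x ≤ Z * Z := by gcongr <;> rw [hZ] <;> linarith [abs_nonneg R]
      _ = _ := by ring
  have ht' : |ip ξ ξ * ip x x| ≤ Z ^ 2 := by rw [abs_of_nonneg (by positivity)]; exact ht
  have hs : |ip ξ x| ≤ Z := abs_le_of_sq_le_sq ((ip_cs ξ x).trans ht) (by linarith)
  refine ⟨gen α β hα hβ k ξ x hs ht' ?_, gen α β hα hβ k x ξ (by rwa [ip_comm]) (by rwa [mul_comm]) ?_⟩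
  · have := hM2 ξ hξ
    rw [hM]; have := le_abs_self M2; have := abs_nonneg M1; have := norm_nonneg (1 : Cl m); linarith
  · have := hM1 ξ hξ
    rw [hM]; have := le_abs_self M1; have := abs_nonneg M2; have := norm_nonneg (1 : Cl m); linarith

end VPart

section MainCompact

attribute [local instance] clRing clTower clComm clNS

lemma cl_norm_coeff_le (a : Cl m) (S : Finset (Fin m)) : ‖coeff a S‖ ≤ ‖a‖ :=
  norm_le_pi_norm (f := (a : Finset (Fin m) → ℂ)) S

lemma sg_norm (S T : Finset (Fin m)) : ‖sg S T‖ = 1 := by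
  simp only [sg, norm_mul, norm_pow, norm_prod, apply_ite norm, norm_neg, norm_one, ite_self, Finset.prod_const_one, one_pow, mul_one]

lemma cl_norm_mul_le (a b : Cl m) : ‖a * b‖ ≤ (Fintype.card (Finset (Fin m)) : ℝ) * (‖a‖ * ‖b‖) := by
  refine (pi_norm_le_iff_of_nonneg (by positivity)).2 fun S => ?_
  change ‖coeff (a * b) S‖ ≤ _
  rw [mul_apply]
  refine (norm_sum_le _ _).trans ?_
  calc _ ≤ ∑ T : Finset (Fin m), ‖a‖ * ‖b‖ := by
        refine Finset.sum_le_sum fun T _ => ?_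
        rw [norm_mul, norm_mul, sg_norm, one_mul]
        exact mul_le_mul (cl_norm_coeff_le _ _) (cl_norm_coeff_le _ _) (norm_nonneg _) (norm_nonneg _)
    _ = _ := by simp

lemma hasSum_cl_mul_left {ι : Type*} {f : ι → Cl m} {s : Cl m} (hf : HasSum f s) (a : Cl m) :
    HasSum (fun i => a * f i) (a * s) :=
  hf.map (AddMonoidHom.mulLeft a) (continuous_mul' continuous_const continuous_id)

lemma hasSum_cl_mul_right {ι : Type*} {f : ι → Cl m} {s : Cl m} (hf : HasSum f s) (a : Cl m) :
    HasSum (fun i => f i * a) (s * a) :=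
  hf.map (AddMonoidHom.mulRight a) (continuous_mul' continuous_id continuous_const)

lemma hasSum_prod_cl {f g : ℕ → Cl m} {s t : Cl m} (hf : HasSum f s) (hg : HasSum g t)
    {b c : ℕ → ℝ} (hb : Summable b) (hc : Summable c) (hfb : ∀ k, ‖f k‖ ≤ b k) (hgc : ∀ k, ‖g k‖ ≤ c k) :
    HasSum (fun p : ℕ × ℕ => f p.1 * g p.2) (s * t) := by
  have hs : Summable (fun p : ℕ × ℕ => f p.1 * g p.2) := by
    refine Summable.of_norm_bounded ((hb.mul_of_nonneg hc (fun k => (norm_nonneg _).trans (hfb k))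
      (fun k => (norm_nonneg _).trans (hgc k))).mul_left (Fintype.card (Finset (Fin m)) : ℝ)) ?_
    rintro ⟨k, l⟩
    refine (cl_norm_mul_le _ _).trans ?_
    have := (norm_nonneg _).trans (hfb k)
    have h1 := hfb k
    have h2 := hgc l
    dsimp only
    gcongr
  have h1 := hs.hasSum.prod_fiberwise (g := fun k => f k * t) (fun k => hasSum_cl_mul_left hg (f k))
  rw [← h1.unique (hasSum_cl_mul_right hf t)]
  exact hs.hasSum

lemma Wt.mul {R : ℝ} {h : (Fin m → ℝ) → ℂ} (hh : Wt R h) {g : (Fin m → ℝ) → ℂ}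
    (hg : Measurable g) (hinv : ∀ j l, j < l → ∀ θ ξ, g (rot j l θ ξ) = g ξ)
    {M : ℝ} (hM : ∀ ξ, ip ξ ξ ≤ R → ‖g ξ‖ ≤ M) : Wt R (fun ξ => h ξ * g ξ) where
  int := hh.integrable_smul hg.aestronglyMeasurable hM
  inv := fun j l hjl θ ξ => by rw [hh.inv j l hjl, hinv j l hjl]
  supp := fun ξ hξ => by rw [hh.supp ξ hξ, zero_mul]

lemma QP_zero (x y : Fin m → ℝ) : QP 0 0 x y = 0 := by
  rw [QP, U_eq]; simp [Uc, QQ, QQ', EE]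

def hw (h : (Fin m → ℝ) → ℂ) (n k l : ℕ) (x y ξ : Fin m → ℝ) : ℂ :=
  h ξ * (((aa n k (ip ξ ξ * ip x x) : ℝ) : ℂ) * ((aa n l (ip y y * ip ξ ξ) : ℝ) : ℂ))

lemma measurable_ip_left : Measurable (fun ξ : Fin m → ℝ => ip ξ ξ) :=
  (continuous_ip continuous_id continuous_id).measurable

lemma Wt.hw {R : ℝ} {h : (Fin m → ℝ) → ℂ} (hh : Wt R h) (n k l : ℕ) (x y : Fin m → ℝ) :
    Wt R (hw h n k l x y) := by
  have hmeas : ∀ (k : ℕ) (c : ℝ), Measurable (fun ξ : Fin m → ℝ => ((aa n k (ip ξ ξ * c) : ℝ) : ℂ)) := fun k c =>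
    Complex.measurable_ofReal.comp ((aa_measurable n k).comp (measurable_ip_left.mul_const c))
  have hbd : ∀ (k : ℕ) (c : ℝ) (hc : 0 ≤ c), ∀ ξ : Fin m → ℝ, ip ξ ξ ≤ R → ‖((aa n k (ip ξ ξ * c) : ℝ) : ℂ)‖ ≤
      Real.exp (R * c) / k.factorial := by
    intro k c hc ξ hξ
    rw [Complex.norm_real, Real.norm_eq_abs]
    refine (aa_bound _ _ _).trans ?_
    have := ip_self_nonneg ξ
    rw [abs_of_nonneg (by positivity)]
    gcongr
  refine hh.mul (M := (Real.exp (R * ip x x) / k.factorial) * (Real.exp (R * ip y y) / l.factorial)) ?_ ?_ ?_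
  · simp only [mul_comm (ip y y)]
    exact (hmeas k _).mul (hmeas l _)
  · intro j l hjl θ ξ
    rw [ip_rot j l hjl]
  · intro ξ hξ
    rw [norm_mul, mul_comm (ip y y)]
    have h1 := hbd k (ip x x) (ip_self_nonneg x) ξ hξ
    have h2 := hbd l (ip y y) (ip_self_nonneg y) ξ hξ
    gcongr

lemma int4 {F1 F2 F3 F4 : (Fin m → ℝ) → Cl m} (h1 : Integrable F1) (h2 : Integrable F2) (h3 : Integrable F3)
    (h4 : Integrable F4) (a b c d : ℂ) :
    Integrable (fun ξ => a • F1 ξ + b • F2 ξ + c • F3 ξ + d • F4 ξ) ∧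
    ∫ ξ, (a • F1 ξ + b • F2 ξ + c • F3 ξ + d • F4 ξ)
      = a • (∫ ξ, F1 ξ) + b • (∫ ξ, F2 ξ) + c • (∫ ξ, F3 ξ) + d • (∫ ξ, F4 ξ) := by
  have i1 := h1.fun_smul a
  have i2 := h2.fun_smul b
  have i3 := h3.fun_smul c
  have i4 := h4.fun_smul d
  have i12 := i1.fun_add i2
  have i123 := i12.fun_add i3
  refine ⟨i123.fun_add i4, ?_⟩
  rw [integral_add i123 i4, integral_add i12 i3, integral_add i1 i2,
    integral_smul, integral_smul, integral_smul, integral_smul]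

lemma V_term {R : ℝ} {h : (Fin m → ℝ) → ℂ} (hh : Wt R h) (n : ℕ) (hm : m = 2 * n + 2)
    (α β α' β' : ℂ) (k l : ℕ) (x y : Fin m → ℝ) :
    Integrable (fun ξ => h ξ • (V n α β k ξ x * V n α' β' l y ξ)) ∧
    (∫ ξ, h ξ • (V n α β k ξ x * V n α' β' l y ξ))
      = if k = l then (α * α') • (∫ ξ, hw h n k l x y ξ • (PP n k ξ x * PP n l y ξ))
        + (β * β') • (∫ ξ, hw h n k l x y ξ • (QP n k ξ x * QP n l y ξ)) else 0 := by
  have hmr : (m:ℝ) = 2 * ((n:ℝ) + 1) := by rw [hm]; push_cast; ring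
  have hW := hh.hw n k l x y
  have cPk : Continuous (fun ξ => PP n k ξ x) := (eigP n k hmr).cL x
  have cQk : Continuous (fun ξ => QP n k ξ x) := (eigQ n k hmr).cL x
  have cPl : Continuous (fun ξ => PP n l y ξ) := (eigP n l hmr).cR y
  have cQl : Continuous (fun ξ => QP n l y ξ) := (eigQ n l hmr).cR y
  have iPP := (hW.int_cont (continuous_mul' cPk cPl))
  have iPQ := (hW.int_cont (continuous_mul' cPk cQl))
  have iQP := (hW.int_cont (continuous_mul' cQk cPl))
  have iQQ := (hW.int_cont (continuous_mul' cQk cQl))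
  have hexp : (fun ξ => h ξ • (V n α β k ξ x * V n α' β' l y ξ))
      = fun ξ => (((α * α') • (hw h n k l x y ξ • (PP n k ξ x * PP n l y ξ))
        + (α * β') • (hw h n k l x y ξ • (PP n k ξ x * QP n l y ξ)))
        + (β * α') • (hw h n k l x y ξ • (QP n k ξ x * PP n l y ξ)))
        + (β * β') • (hw h n k l x y ξ • (QP n k ξ x * QP n l y ξ)) := by
    funext ξ
    simp only [V, CliffordFourier.hw, smul_mul_assoc, mul_smul_comm, mul_add, add_mul, smul_add, smul_smul]
    module
  have zPQ : ∫ ξ, hw h n k l x y ξ • (PP n k ξ x * QP n l y ξ) = 0 := by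
    by_cases h0 : n = 0 ∧ k = 0 ∧ l = 0
    · obtain ⟨rfl, rfl, rfl⟩ := h0
      simp [QP_zero]
    · refine hW.orth (eigP n k hmr) (eigQ n l hmr) ?_ x y
      intro hcon
      have : (k:ℝ) + l + 2 * n = 0 := by linarith
      have : k + l + 2 * n = 0 := by exact_mod_cast this
      omega
  have zQP : ∫ ξ, hw h n k l x y ξ • (QP n k ξ x * PP n l y ξ) = 0 := by
    by_cases h0 : n = 0 ∧ k = 0 ∧ l = 0
    · obtain ⟨rfl, rfl, rfl⟩ := h0
      simp [QP_zero]
    · refine hW.orth (eigQ n k hmr) (eigP n l hmr) ?_ x y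
      intro hcon
      have : (k:ℝ) + l + 2 * n = 0 := by linarith
      have : k + l + 2 * n = 0 := by exact_mod_cast this
      omega
  rw [hexp]
  obtain ⟨hi, he⟩ := int4 iPP iPQ iQP iQQ (α * α') (α * β') (β * α') (β * β')
  refine ⟨hi, he.trans ?_⟩
  rw [zPQ, zQP, smul_zero, smul_zero, add_zero, add_zero]
  split_ifs with hkl
  · rfl
  · have hne : (k:ℝ) ≠ l := by exact_mod_cast hkl
    have z1 : ∫ ξ, hw h n k l x y ξ • (PP n k ξ x * PP n l y ξ) = 0 :=
      hW.orth (eigP n k hmr) (eigP n l hmr) (by intro hc; exact hne (by linarith)) x y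
    have z2 : ∫ ξ, hw h n k l x y ξ • (QP n k ξ x * QP n l y ξ) = 0 :=
      hW.orth (eigQ n k hmr) (eigQ n l hmr) (by intro hc; exact hne (by linarith)) x y
    rw [z1, z2]; simp

def SS (h : (Fin m → ℝ) → ℂ) (n : ℕ) (x y : Fin m → ℝ) : Cl m :=
  ∑' p : ℕ × ℕ, if p.1 = p.2 then (∫ ξ, hw h n p.1 p.2 x y ξ • (PP n p.1 ξ x * PP n p.2 y ξ))
        + (∫ ξ, hw h n p.1 p.2 x y ξ • (QP n p.1 ξ x * QP n p.2 y ξ)) else 0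

lemma compact_eq {R : ℝ} {h : (Fin m → ℝ) → ℂ} (hh : Wt R h) (n : ℕ) (hm : m = 2 * n + 2) (x y : Fin m → ℝ)
    (α β α' β' : ℕ → ℂ) (nα : ∀ k, ‖α k‖ ≤ 1) (nβ : ∀ k, ‖β k‖ ≤ 1) (nα' : ∀ k, ‖α' k‖ ≤ 1) (nβ' : ∀ k, ‖β' k‖ ≤ 1)
    (h1 : ∀ k, α k * α' k = 1) (h2 : ∀ k, β k * β' k = 1) (Ψ Ψ' : (Fin m → ℝ) → Cl m)
    (hΨ : ∀ ξ, HasSum (fun k => V n (α k) (β k) k ξ x) (Ψ ξ))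
    (hΨ' : ∀ ξ, HasSum (fun k => V n (α' k) (β' k) k y ξ) (Ψ' ξ)) :
    ∫ ξ, h ξ • (Ψ ξ * Ψ' ξ) = SS h n x y := by
  set F : ℕ × ℕ → (Fin m → ℝ) → Cl m := fun p ξ =>
    h ξ • (V n (α p.1) (β p.1) p.1 ξ x * V n (α' p.2) (β' p.2) p.2 y ξ) with hF
  have hpt : ∀ ξ, h ξ • (Ψ ξ * Ψ' ξ) = ∑' p, F p ξ := by
    intro ξ
    obtain ⟨b, hb, -, hbb⟩ := V_bound n x (ip ξ ξ)
    obtain ⟨c, hc, -, hcc⟩ := V_bound n y (ip ξ ξ)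
    have := (hasSum_prod_cl (hΨ ξ) (hΨ' ξ) hb hc (fun k => (hbb _ _ (nα k) (nβ k) k ξ le_rfl).1)
      (fun k => (hcc _ _ (nα' k) (nβ' k) k ξ le_rfl).2)).const_smul (h ξ)
    exact this.tsum_eq.symm
  have hint : ∀ p, Integrable (F p) := fun p => (V_term hh n hm _ _ _ _ p.1 p.2 x y).1
  have hsum : Summable (fun p => ∫ ξ, ‖F p ξ‖) := by
    obtain ⟨b, hb, hb0, hbb⟩ := V_bound n x R
    obtain ⟨c, hc, hc0, hcc⟩ := V_bound n y R
    refine Summable.of_nonneg_of_le (fun p => integral_nonneg fun ξ => norm_nonneg _) ?_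
      ((hb.mul_of_nonneg hc hb0 hc0).mul_left ((∫ ξ, ‖h ξ‖) * (Fintype.card (Finset (Fin m)) : ℝ)))
    rintro ⟨k, l⟩
    rw [mul_assoc, ← integral_mul_const]
    refine integral_mono (hint _).norm (hh.int.norm.mul_const _) ?_
    intro ξ
    simp only [hF, norm_smul]
    by_cases hξ : ip ξ ξ ≤ R
    · refine mul_le_mul_of_nonneg_left ((cl_norm_mul_le _ _).trans ?_) (norm_nonneg _)
      have q1 := (hbb _ _ (nα k) (nβ k) k ξ hξ).1
      have q2 := (hcc _ _ (nα' l) (nβ' l) l ξ hξ).2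
      have := hb0 k
      gcongr
    · rw [hh.supp ξ (not_le.1 hξ)]; simp
  have := hasSum_integral_of_summable_integral_norm hint hsum
  simp only [← hpt] at this
  rw [← this.tsum_eq, SS]
  congr 1
  funext p
  rw [(V_term hh n hm _ _ _ _ p.1 p.2 x y).2]
  split_ifs with hp
  · rw [← hp, h1, h2, one_smul, one_smul]
  · rfl

theorem compact_main {R : ℝ} {h : (Fin m → ℝ) → ℂ} (hh : Wt R h) (n : ℕ) (hm : m = 2 * n + 2) (x y : Fin m → ℝ) :
    ∫ ξ, h ξ • (Kminus m ξ x * Kminus m y ξ)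
      = (∫ ξ, h ξ * (Complex.exp (Complex.I * (ip ξ x : ℝ)) * Complex.exp (-Complex.I * (ip y ξ : ℝ)))) • (1 : Cl m) := by
  have e1 := compact_eq hh n hm x y (fun k => (-1)^k) (fun _ => (-1)^n) (fun k => (-1)^k) (fun _ => (-1)^n)
    (by simp) (by simp) (by simp) (by simp) (fun k => by rw [← mul_pow]; simp) (fun k => by rw [← mul_pow]; simp) _ _
    (fun ξ => V_K n hm ξ x) (fun ξ => V_K n hm y ξ)
  have e2 := compact_eq hh n hm x y (fun k => Complex.I^k) (fun k => Complex.I^k) (fun k => (-Complex.I)^k)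
    (fun k => (-Complex.I)^k)
    (by simp) (by simp) (by simp) (by simp) (fun k => by rw [← mul_pow]; simp) (fun k => by rw [← mul_pow]; simp) _ _
    (fun ξ => V_exp n Complex.I (by simp) ξ x) (fun ξ => V_exp n (-Complex.I) (by simp) y ξ)
  rw [e1, ← e2, ← integral_smul_const]
  congr 1
  funext ξ
  rw [smul_mul_assoc, one_mul, smul_smul, smul_smul, mul_assoc]

end MainCompact

section Extend

attribute [local instance] clRing clTower clComm clNS

lemma Afun_real (u lam w z : ℝ) : ∃ a : ℝ, AfunR u lam w z = (a : ℂ) :=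
  ⟨((2:ℝ)^(lam - 1) * Real.Gamma (lam + 1)) *
    ∑' k : ℕ, (u + (-1 : ℝ)^k) * (z^k * besselJt ((k : ℝ) + lam) z * geg lam k w), by
    rw [AfunR]; push_cast [Complex.ofReal_tsum]; try rfl⟩

lemma Bfun_real (u lam w z : ℝ) : ∃ a : ℝ, BfunR u lam w z = (a : ℂ) :=
  ⟨(-((2:ℝ)^(lam - 1) * Real.Gamma (lam + 1))) *
    ∑' k : ℕ, (u - (-1 : ℝ)^k) * (z^k * besselJt ((k : ℝ) + lam) z * gegT lam k w), by
    rw [BfunR]; push_cast [Complex.ofReal_tsum]; try rfl⟩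

lemma Cfun_real (u lam w z : ℝ) : ∃ a : ℝ, CfunR u lam w z = (a : ℂ) :=
  ⟨(-((2:ℝ)^lam * Real.Gamma (lam + 1))) *
    ∑' k : ℕ, (u + (-1 : ℝ)^k) * (z^(k-1) * besselJt ((k : ℝ) + lam) z
        * (if 1 ≤ k then geg (lam + 1) (k - 1) w else 0)), by
    rw [CfunR]; push_cast [Complex.ofReal_tsum]; try rfl⟩

lemma K_form (n : ℕ) (hm : m = 2 * n + 2) (x y : Fin m → ℝ) : ∃ a c : ℝ,
    Kminus m x y = (a:ℂ) • (1 : Cl m) + (c:ℂ) • wedge m x y ∧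
    Kminus m y x = (a:ℂ) • (1 : Cl m) + (-(c:ℂ)) • wedge m x y := by
  have hu : (Complex.I ^ m) = ((-(-1)^n : ℝ) : ℂ) := by
    rw [hm, pow_add, pow_mul]; push_cast; simp
  obtain ⟨a, ha⟩ := Afun_real (-(-1)^n) (((m:ℝ) - 2)/2) (ip x y / (nrm x * nrm y)) (nrm x * nrm y)
  obtain ⟨b, hb⟩ := Bfun_real (-(-1)^n) (((m:ℝ) - 2)/2) (ip x y / (nrm x * nrm y)) (nrm x * nrm y)
  obtain ⟨c, hc⟩ := Cfun_real (-(-1)^n) (((m:ℝ) - 2)/2) (ip x y / (nrm x * nrm y)) (nrm x * nrm y)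
  refine ⟨a + b, c, ?_, ?_⟩
  · rw [Kminus, hu, ha, hb, hc, Complex.ofReal_add]
  · rw [Kminus, hu, ip_comm y x, mul_comm (nrm y), ha, hb, hc, Complex.ofReal_add, wedge_swap x y, smul_neg, neg_smul]

def Nn (m : ℕ) (x y : Fin m → ℝ) : ℝ := (coeff (Kminus m x y * Kminus m y x) ∅).re

lemma coeff_smul_one (c : ℂ) : coeff (c • (1 : Cl m)) ∅ = c := by
  rw [coeff_smul, coeff_one]; simp

lemma smul_one_inj {a b : ℂ} (h : a • (1 : Cl m) = b • (1 : Cl m)) : a = b := by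
  rw [← coeff_smul_one (m := m) a, h, coeff_smul_one]

lemma K_prod (n : ℕ) (hm : m = 2 * n + 2) (x y : Fin m → ℝ) : ∃ a c : ℝ,
    Kminus m x y = (a:ℂ) • (1 : Cl m) + (c:ℂ) • wedge m x y ∧
    Kminus m x y * Kminus m y x = ((Nn m x y : ℝ) : ℂ) • (1 : Cl m) ∧
    Nn m x y = a ^ 2 + c ^ 2 * (ip x x * ip y y - ip x y ^ 2) := by
  obtain ⟨a, c, h1, h2⟩ := K_form n hm x y
  have h3 : Kminus m x y * Kminus m y x
      = ((a ^ 2 + c ^ 2 * (ip x x * ip y y - ip x y ^ 2) : ℝ) : ℂ) • (1 : Cl m) := by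
    rw [h1, h2]
    simp only [mul_add, add_mul, smul_mul_assoc, mul_smul_comm, one_mul, mul_one, wedge_sq]
    push_cast
    module
  have h4 : Nn m x y = a ^ 2 + c ^ 2 * (ip x x * ip y y - ip x y ^ 2) := by
    rw [Nn, h3, coeff_smul_one, Complex.ofReal_re]
  exact ⟨a, c, h1, by rw [h3, h4], h4⟩

lemma Nn_nonneg (n : ℕ) (hm : m = 2 * n + 2) (x y : Fin m → ℝ) : 0 ≤ Nn m x y := by
  obtain ⟨a, c, -, -, h⟩ := K_prod n hm x y
  rw [h]
  have := ip_cs x y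
  have : 0 ≤ ip x x * ip y y - ip x y ^ 2 := by linarith
  positivity

lemma Nn_symm (n : ℕ) (hm : m = 2 * n + 2) (x y : Fin m → ℝ) : Nn m y x = Nn m x y := by
  obtain ⟨a, c, h1, h2⟩ := K_form n hm x y
  rw [Nn, Nn, h1, h2]
  congr 2
  simp only [mul_add, add_mul, smul_mul_assoc, mul_smul_comm, one_mul, mul_one]
  module

lemma lagrange (x y : Fin m → ℝ) : ∑ j, ∑ k, (x j * y k - x k * y j) ^ 2 = 2 * (ip x x * ip y y - ip x y ^ 2) := by
  have h1 : ∀ j k, (x j * y k - x k * y j) ^ 2 = (x j * x j) * (y k * y k) - 2 * ((x j * y j) * (x k * y k)) + (y j * y j) * (x k * x k) := by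
    intro j k; ring
  simp only [h1, Finset.sum_add_distrib, Finset.sum_sub_distrib, ← Finset.mul_sum, ← Finset.sum_mul]
  simp only [ip]
  ring

lemma wedge_norm (m : ℕ) : ∃ D : ℝ, 0 ≤ D ∧ ∀ x y : Fin m → ℝ,
    ‖wedge m x y‖ ≤ D * Real.sqrt (ip x x * ip y y - ip x y ^ 2) := by
  refine ⟨(∑ j : Fin m, ∑ k : Fin m, ‖e m j * e m k‖) * 2, by positivity, ?_⟩
  intro x y
  set q := ip x x * ip y y - ip x y ^ 2 with hq
  have hq0 : 0 ≤ q := by have := ip_cs x y; linarith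
  rw [wedge, mul_assoc, Finset.sum_mul]
  refine (norm_sum_le _ _).trans (Finset.sum_le_sum fun j _ => ?_)
  rw [Finset.sum_mul]
  refine (norm_sum_le _ _).trans (Finset.sum_le_sum fun k _ => ?_)
  split_ifs
  · rw [norm_smul, Complex.norm_real, Real.norm_eq_abs, mul_comm]
    refine mul_le_mul_of_nonneg_left ?_ (norm_nonneg _)
    refine abs_le_of_sq_le_sq ?_ (by positivity)
    rw [mul_pow, Real.sq_sqrt hq0]
    have h1 : (x j * y k - x k * y j) ^ 2 ≤ ∑ k, (x j * y k - x k * y j) ^ 2 :=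
      Finset.single_le_sum (f := fun k => (x j * y k - x k * y j) ^ 2) (fun i _ => sq_nonneg _) (Finset.mem_univ k)
    have h2 : ∑ k, (x j * y k - x k * y j) ^ 2 ≤ ∑ j, ∑ k, (x j * y k - x k * y j) ^ 2 :=
      Finset.single_le_sum (f := fun j => ∑ k, (x j * y k - x k * y j) ^ 2)
        (fun i _ => Finset.sum_nonneg fun i _ => sq_nonneg _) (Finset.mem_univ j)
    rw [lagrange, ← hq] at h2
    linarith
  · rw [norm_zero]; positivity

lemma K_norm (n : ℕ) (hm : m = 2 * n + 2) : ∃ C : ℝ, 0 ≤ C ∧ ∀ x y : Fin m → ℝ,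
    ‖Kminus m x y‖ ≤ C * Real.sqrt (Nn m x y) := by
  obtain ⟨D, hD, hW⟩ := wedge_norm m
  refine ⟨‖(1 : Cl m)‖ + D, by positivity, ?_⟩
  intro x y
  obtain ⟨a, c, h1, -, h⟩ := K_prod n hm x y
  set q := ip x x * ip y y - ip x y ^ 2 with hq
  have hq0 : 0 ≤ q := by have := ip_cs x y; linarith
  have ha : |a| ≤ Real.sqrt (Nn m x y) := by
    apply Real.abs_le_sqrt; rw [h]; nlinarith [mul_nonneg (sq_nonneg c) hq0]
  have hc : |c| * Real.sqrt q ≤ Real.sqrt (Nn m x y) := by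
    apply Real.le_sqrt_of_sq_le
    rw [mul_pow, Real.sq_sqrt hq0, sq_abs, h]; nlinarith [sq_nonneg a]
  rw [h1]
  refine (norm_add_le _ _).trans ?_
  rw [norm_smul, norm_smul, Complex.norm_real, Complex.norm_real, Real.norm_eq_abs, Real.norm_eq_abs]
  calc _ ≤ |a| * ‖(1 : Cl m)‖ + |c| * (D * Real.sqrt q) := by
        gcongr
        exact hW x y
    _ = |a| * ‖(1 : Cl m)‖ + D * (|c| * Real.sqrt q) := by ring
    _ ≤ Real.sqrt (Nn m x y) * ‖(1 : Cl m)‖ + D * Real.sqrt (Nn m x y) := by gcongr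
    _ = _ := by ring

lemma K_smL (n : ℕ) (hm : m = 2 * n + 2) (x : Fin m → ℝ) : StronglyMeasurable (fun ξ => Kminus m ξ x) := by
  have hmr : (m:ℝ) = 2 * ((n:ℝ) + 1) := by rw [hm]; push_cast; ring
  refine stronglyMeasurable_of_tendsto Filter.atTop
    (f := fun N ξ => ∑ k ∈ Finset.range N, V n ((-1)^k) ((-1)^n) k ξ x) ?_
    (tendsto_pi_nhds.2 fun ξ => (V_K n hm ξ x).tendsto_sum_nat)
  intro N
  refine Finset.stronglyMeasurable_fun_sum _ fun k _ => ?_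
  have h1 : Measurable (fun ξ : Fin m → ℝ => ((aa n k (ip ξ ξ * ip x x) : ℝ) : ℂ)) :=
    Complex.measurable_ofReal.comp ((aa_measurable n k).comp (measurable_ip_left.mul_const _))
  have h2 : Continuous (fun ξ => PP n k ξ x) := (eigP n k hmr).cL x
  have h3 : Continuous (fun ξ => QP n k ξ x) := (eigQ n k hmr).cL x
  have h4 : Continuous (fun ξ => ((-1:ℂ)^k) • PP n k ξ x + ((-1:ℂ)^n) • QP n k ξ x) := by
    have q1 := h2.const_smul ((-1:ℂ)^k)
    have q2 := h3.const_smul ((-1:ℂ)^n)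
    exact q1.add q2
  exact h1.stronglyMeasurable.smul h4.stronglyMeasurable

lemma K_smR (n : ℕ) (hm : m = 2 * n + 2) (x : Fin m → ℝ) : StronglyMeasurable (fun ξ => Kminus m x ξ) := by
  have hmr : (m:ℝ) = 2 * ((n:ℝ) + 1) := by rw [hm]; push_cast; ring
  refine stronglyMeasurable_of_tendsto Filter.atTop
    (f := fun N ξ => ∑ k ∈ Finset.range N, V n ((-1)^k) ((-1)^n) k x ξ) ?_
    (tendsto_pi_nhds.2 fun ξ => (V_K n hm x ξ).tendsto_sum_nat)
  intro N
  refine Finset.stronglyMeasurable_fun_sum _ fun k _ => ?_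
  have h1 : Measurable (fun ξ : Fin m → ℝ => ((aa n k (ip x x * ip ξ ξ) : ℝ) : ℂ)) :=
    Complex.measurable_ofReal.comp ((aa_measurable n k).comp (measurable_ip_left.const_mul _))
  have h2 : Continuous (fun ξ => PP n k x ξ) := (eigP n k hmr).cR x
  have h3 : Continuous (fun ξ => QP n k x ξ) := (eigQ n k hmr).cR x
  have h4 : Continuous (fun ξ => ((-1:ℂ)^k) • PP n k x ξ + ((-1:ℂ)^n) • QP n k x ξ) := by
    have q1 := h2.const_smul ((-1:ℂ)^k)
    have q2 := h3.const_smul ((-1:ℂ)^n)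
    exact q1.add q2
  exact h1.stronglyMeasurable.smul h4.stronglyMeasurable

lemma KK_sm (n : ℕ) (hm : m = 2 * n + 2) (x y : Fin m → ℝ) :
    StronglyMeasurable (fun ξ => Kminus m ξ x * Kminus m y ξ) := by
  have hc : Continuous (fun p : Cl m × Cl m => p.1 * p.2) :=
    continuous_mul' (X := Cl m × Cl m) (F := Prod.fst) (G := Prod.snd) continuous_fst continuous_snd
  exact Continuous.comp_stronglyMeasurable (g := fun p : Cl m × Cl m => p.1 * p.2)
    (f := fun ξ => (Kminus m ξ x, Kminus m y ξ)) hc ((K_smL n hm x).prodMk (K_smR n hm y))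

lemma continuous_coeff (S : Finset (Fin m)) : Continuous (fun a : Cl m => coeff a S) :=
  continuous_apply S

lemma Nn_sm (n : ℕ) (hm : m = 2 * n + 2) (x : Fin m → ℝ) : StronglyMeasurable (fun ξ => Nn m ξ x) :=
  (Complex.continuous_re.comp (continuous_coeff ∅)).comp_stronglyMeasurable (KK_sm n hm x x)

lemma K_bdd (n : ℕ) (hm : m = 2 * n + 2) (x y : Fin m → ℝ) (R : ℝ) : ∃ M : ℝ, ∀ ξ, ip ξ ξ ≤ R →
    ‖Kminus m ξ x * Kminus m y ξ‖ ≤ M := by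
  obtain ⟨b, hb, hb0, hbb⟩ := V_bound n x R
  obtain ⟨c, hc, hc0, hcc⟩ := V_bound n y R
  refine ⟨(Fintype.card (Finset (Fin m)) : ℝ) * ((∑' k, b k) * (∑' k, c k)), fun ξ hξ => ?_⟩
  refine (cl_norm_mul_le _ _).trans ?_
  have h1 : ‖Kminus m ξ x‖ ≤ ∑' k, b k := by
    rw [← (V_K n hm ξ x).tsum_eq]
    exact tsum_of_norm_bounded hb.hasSum (fun k => (hbb _ _ (by simp) (by simp) k ξ hξ).1)
  have h2 : ‖Kminus m y ξ‖ ≤ ∑' k, c k := by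
    rw [← (V_K n hm y ξ).tsum_eq]
    exact tsum_of_norm_bounded hc.hasSum (fun k => (hcc _ _ (by simp) (by simp) k ξ hξ).2)
  have := (norm_nonneg _).trans h1
  gcongr

def bal (m : ℕ) (i : ℕ) : Set (Fin m → ℝ) := {ξ | ip ξ ξ ≤ i}

lemma bal_meas (i : ℕ) : MeasurableSet (bal m i) := measurableSet_le measurable_ip_left measurable_const

lemma bal_cover : AECover volume Filter.atTop (bal m) where
  ae_eventually_mem := Filter.Eventually.of_forall fun ξ => by
    obtain ⟨N, hN⟩ := exists_nat_ge (ip ξ ξ)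
    filter_upwards [Filter.eventually_ge_atTop N] with i hi
    exact hN.trans (by exact_mod_cast hi)
  measurableSet := bal_meas

lemma Wt_ind {h : (Fin m → ℝ) → ℂ} (hi : Integrable h) (hinv : ∀ j l, j < l → ∀ θ ξ, h (rot j l θ ξ) = h ξ) (i : ℕ) :
    Wt (i:ℝ) ((bal m i).indicator h) where
  int := hi.indicator (bal_meas i)
  inv := fun j l hjl θ ξ => by
    have hmem : rot j l θ ξ ∈ bal m i ↔ ξ ∈ bal m i := by
      simp only [bal, Set.mem_ofPred_eq, ip_rot j l hjl]
    by_cases hξ : ξ ∈ bal m i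
    · rw [Set.indicator_of_mem hξ, Set.indicator_of_mem (hmem.2 hξ), hinv j l hjl]
    · rw [Set.indicator_of_notMem hξ, Set.indicator_of_notMem (fun hc => hξ (hmem.1 hc))]
  supp := fun ξ hξ => Set.indicator_of_notMem (by simp only [bal, Set.mem_ofPred_eq]; linarith) _

lemma exp_cancel (ξ x : Fin m → ℝ) : Complex.exp (Complex.I * (ip ξ x : ℝ)) * Complex.exp (-Complex.I * (ip x ξ : ℝ)) = 1 := by
  rw [← Complex.exp_add, ip_comm x ξ]
  simp

lemma int_N (n : ℕ) (hm : m = 2 * n + 2) {h : (Fin m → ℝ) → ℂ} (hi : Integrable h)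
    (hinv : ∀ j l, j < l → ∀ θ ξ, h (rot j l θ ξ) = h ξ) (x : Fin m → ℝ) :
    Integrable (fun ξ => ‖h ξ‖ * Nn m ξ x) := by
  have hWt := Wt_ind (h := fun ξ => ((‖h ξ‖ : ℝ) : ℂ)) hi.norm.ofReal (fun j l hjl θ ξ => by rw [hinv j l hjl])
  have hind : ∀ i : ℕ, ∀ ξ, (bal m i).indicator (fun ξ => ((‖h ξ‖ : ℝ) : ℂ)) ξ • (Kminus m ξ x * Kminus m x ξ)
      = (((bal m i).indicator (fun ξ => ‖h ξ‖ * Nn m ξ x) ξ : ℝ) : ℂ) • (1 : Cl m) := by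
    intro i ξ
    obtain ⟨-, -, -, h2, -⟩ := K_prod n hm ξ x
    rw [h2, smul_smul]
    by_cases hξ : ξ ∈ bal m i
    · simp [Set.indicator_of_mem hξ]
    · simp [Set.indicator_of_notMem hξ]
  refine bal_cover.integrable_of_integral_bounded_of_nonneg_ae (∫ ξ, ‖h ξ‖) ?_ ?_ ?_
  · intro i
    rw [← integrable_indicator_iff (bal_meas i)]
    obtain ⟨M, hM⟩ := K_bdd n hm x x i
    have h1 := (hWt i).integrable_smul (KK_sm n hm x x).aestronglyMeasurable hM
    simp only [hind] at h1
    have h2 := ((ContinuousLinearMap.proj (R := ℂ) (φ := fun _ : Finset (Fin m) => ℂ) ∅).integrable_comp h1).re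
    refine h2.congr (Filter.Eventually.of_forall fun ξ => ?_)
    change (coeff ((((bal m i).indicator (fun ξ => ‖h ξ‖ * Nn m ξ x) ξ : ℝ) : ℂ) • (1 : Cl m)) ∅).re = _
    rw [coeff_smul_one, Complex.ofReal_re]
  · exact Filter.Eventually.of_forall fun ξ => mul_nonneg (norm_nonneg _) (Nn_nonneg n hm ξ x)
  · refine Filter.Eventually.of_forall fun i => ?_
    have h1 := compact_main (hWt i) n hm x x
    simp only [hind, exp_cancel, mul_one] at h1
    rw [integral_smul_const] at h1
    have h2 := smul_one_inj h1
    have h3 : ∀ ξ, (bal m i).indicator (fun ξ => ((‖h ξ‖ : ℝ) : ℂ)) ξ = (((bal m i).indicator (fun ξ => ‖h ξ‖) ξ : ℝ) : ℂ) := by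
      intro ξ
      by_cases hξ : ξ ∈ bal m i
      · simp [Set.indicator_of_mem hξ]
      · simp [Set.indicator_of_notMem hξ]
    simp only [h3] at h2
    rw [integral_complex_ofReal, integral_complex_ofReal, integral_indicator (bal_meas i), integral_indicator (bal_meas i)] at h2
    have h4 := Complex.ofReal_injective h2
    rw [h4]
    exact setIntegral_le_integral hi.norm (Filter.Eventually.of_forall fun ξ => norm_nonneg _)

theorem general_main (n : ℕ) (hm : m = 2 * n + 2) {h : (Fin m → ℝ) → ℂ} (hi : Integrable h)
    (hinv : ∀ j l, j < l → ∀ θ ξ, h (rot j l θ ξ) = h ξ) (x y : Fin m → ℝ) :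
    ∫ ξ, h ξ • (Kminus m ξ x * Kminus m y ξ)
      = (∫ ξ, h ξ * (Complex.exp (Complex.I * (ip ξ x : ℝ)) * Complex.exp (-Complex.I * (ip y ξ : ℝ)))) • (1 : Cl m) := by
  obtain ⟨C, hC, hK⟩ := K_norm n hm
  have hint : Integrable (fun ξ => h ξ • (Kminus m ξ x * Kminus m y ξ)) := by
    refine Integrable.mono' (((int_N n hm hi hinv x).add (int_N n hm hi hinv y)).const_mul
      ((Fintype.card (Finset (Fin m)) : ℝ) * C ^ 2)) (hi.aestronglyMeasurable.smul (KK_sm n hm x y).aestronglyMeasurable) ?_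
    refine Filter.Eventually.of_forall fun ξ => ?_
    rw [norm_smul]
    have h1 := hK ξ x
    have h2 := hK y ξ
    rw [Nn_symm n hm ξ y] at h2
    have n1 := Nn_nonneg n hm ξ x
    have n2 := Nn_nonneg n hm ξ y
    set a := Nn m ξ x with ha
    set b := Nn m ξ y with hb
    have h3 : Real.sqrt a * Real.sqrt b ≤ a + b := by
      nlinarith [Real.sq_sqrt n1, Real.sq_sqrt n2, sq_nonneg (Real.sqrt a - Real.sqrt b), sq_nonneg (Real.sqrt a), sq_nonneg (Real.sqrt b)]
    calc ‖h ξ‖ * ‖Kminus m ξ x * Kminus m y ξ‖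
        ≤ ‖h ξ‖ * ((Fintype.card (Finset (Fin m)) : ℝ) * ((C * Real.sqrt a) * (C * Real.sqrt b))) := by
          refine mul_le_mul_of_nonneg_left ((cl_norm_mul_le _ _).trans ?_) (norm_nonneg _)
          gcongr
      _ = ‖h ξ‖ * ((Fintype.card (Finset (Fin m)) : ℝ) * C ^ 2 * (Real.sqrt a * Real.sqrt b)) := by ring
      _ ≤ ‖h ξ‖ * ((Fintype.card (Finset (Fin m)) : ℝ) * C ^ 2 * (a + b)) := by gcongr
      _ = (Fintype.card (Finset (Fin m)) : ℝ) * C ^ 2 * (‖h ξ‖ * a + ‖h ξ‖ * b) := by ring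
  have hint2 : Integrable (fun ξ => h ξ * (Complex.exp (Complex.I * (ip ξ x : ℝ)) * Complex.exp (-Complex.I * (ip y ξ : ℝ)))) := by
    have hcont : Continuous (fun ξ : Fin m → ℝ => (Complex.exp (Complex.I * (ip ξ x : ℝ)) * Complex.exp (-Complex.I * (ip y ξ : ℝ)))) := by
      have c1 : Continuous (fun ξ : Fin m → ℝ => ip ξ x) := continuous_ip continuous_id continuous_const
      have c2 : Continuous (fun ξ : Fin m → ℝ => ip y ξ) := continuous_ip continuous_const continuous_id
      fun_prop
    refine Integrable.mono' hi.norm (hi.aestronglyMeasurable.mul hcont.aestronglyMeasurable) ?_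
    refine Filter.Eventually.of_forall fun ξ => ?_
    rw [norm_mul, norm_mul, mul_comm Complex.I, Complex.norm_exp_ofReal_mul_I,
      show -Complex.I * ((ip y ξ : ℝ) : ℂ) = ((-(ip y ξ) : ℝ) : ℂ) * Complex.I by push_cast; ring,
      Complex.norm_exp_ofReal_mul_I]
    simp
  have t1 := bal_cover.integral_tendsto_of_countably_generated hint
  have t2 := (bal_cover.integral_tendsto_of_countably_generated hint2).smul_const (1 : Cl m)
  refine tendsto_nhds_unique t1 (t2.congr fun i => ?_)
  rw [← integral_indicator (bal_meas i), ← integral_indicator (bal_meas i)]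
  have := compact_main (Wt_ind hi hinv i) n hm x y
  have r1 : ∀ ξ, (bal m i).indicator h ξ • (Kminus m ξ x * Kminus m y ξ)
      = (bal m i).indicator (fun ξ => h ξ • (Kminus m ξ x * Kminus m y ξ)) ξ := by
    intro ξ
    by_cases hξ : ξ ∈ bal m i
    · simp [Set.indicator_of_mem hξ]
    · simp [Set.indicator_of_notMem hξ]
  have r2 : ∀ ξ, (bal m i).indicator h ξ * (Complex.exp (Complex.I * (ip ξ x : ℝ)) * Complex.exp (-Complex.I * (ip y ξ : ℝ)))
      = (bal m i).indicator (fun ξ => h ξ * (Complex.exp (Complex.I * (ip ξ x : ℝ)) * Complex.exp (-Complex.I * (ip y ξ : ℝ)))) ξ := by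
    intro ξ
    by_cases hξ : ξ ∈ bal m i
    · rw [Set.indicator_of_mem hξ, Set.indicator_of_mem hξ]
    · rw [Set.indicator_of_notMem hξ, Set.indicator_of_notMem hξ, zero_mul]
  simp only [r1, r2] at this
  rw [this]

end Extend

section Fourier1

lemma temp_const : Function.HasTemperateGrowth (fun _ : EuclideanSpace ℝ (Fin m) => (1 : ℂ)) :=
  Function.HasTemperateGrowth.const 1

def liftS (f : SchwartzMap (Fin m → ℝ) ℝ) : SchwartzMap (EuclideanSpace ℝ (Fin m)) ℂ :=
  SchwartzMap.bilinLeftCLM (𝕜 := ℝ) (ContinuousLinearMap.lsmul ℝ ℝ : ℝ →L[ℝ] ℂ →L[ℝ] ℂ) temp_const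
    (SchwartzMap.compCLMOfContinuousLinearEquiv ℝ (PiLp.continuousLinearEquiv 2 ℝ (fun _ : Fin m => ℝ)) f)

lemma liftS_apply (f : SchwartzMap (Fin m → ℝ) ℝ) (v : EuclideanSpace ℝ (Fin m)) :
    liftS f v = (f v.ofLp : ℂ) := by
  have : liftS f v = (f v.ofLp) • (1 : ℂ) := rfl
  rw [this]; simp

lemma inner_ip (v w : EuclideanSpace ℝ (Fin m)) : inner ℝ v w = ip v.ofLp w.ofLp := by
  simp only [PiLp.inner_apply, ip]
  refine Finset.sum_congr rfl fun i _ => ?_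
  simp [mul_comm]

lemma integral_transfer (G : (Fin m → ℝ) → ℂ) :
    ∫ v : EuclideanSpace ℝ (Fin m), G v.ofLp = ∫ v, G v :=
  (PiLp.volume_preserving_ofLp (Fin m)).integral_comp
    (MeasurableEquiv.toLp 2 (Fin m → ℝ)).symm.measurableEmbedding G

lemma integrable_transfer (G : (Fin m → ℝ) → ℂ)
    (h : Integrable (fun v : EuclideanSpace ℝ (Fin m) => G v.ofLp)) : Integrable G :=
  ((PiLp.volume_preserving_ofLp (Fin m)).integrable_comp_emb
    (MeasurableEquiv.toLp 2 (Fin m → ℝ)).symm.measurableEmbedding).1 h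

open FourierTransform in
lemma fourier_part (f : SchwartzMap (Fin m → ℝ) ℝ) (G : (Fin m → ℝ) → ℂ)
    (hG : ∀ ξ, G ξ = ∫ v, (f v : ℂ) * Complex.exp (Complex.I * (ip v ξ : ℝ))) :
    Integrable G ∧ ∀ u, ∫ ξ, G ξ * Complex.exp (-Complex.I * (ip u ξ : ℝ))
      = (((2 * Real.pi) ^ m : ℝ) : ℂ) * (f u : ℂ) := by
  have hpi : (2 * Real.pi) ≠ 0 := by positivity
  set H : SchwartzMap (EuclideanSpace ℝ (Fin m)) ℂ := 𝓕⁻ (liftS f) with hH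
  have key : ∀ w : EuclideanSpace ℝ (Fin m), G w.ofLp = H ((2 * Real.pi)⁻¹ • w) := by
    intro w
    rw [hG, hH, SchwartzMap.fourierInv_coe, Real.fourierInv_eq', ← integral_transfer]
    refine integral_congr_ae (Filter.Eventually.of_forall fun v => ?_)
    simp only [smul_eq_mul]
    rw [liftS_apply, inner_smul_right, inner_ip, mul_comm]
    congr 2
    rw [← mul_assoc, mul_inv_cancel₀ hpi, one_mul, mul_comm]
  constructor
  · refine integrable_transfer G ?_
    simp only [key]
    exact H.integrable.comp_smul (inv_ne_zero hpi)
  · intro u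
    have inv : (𝓕 H) (WithLp.toLp 2 u) = (f u : ℂ) := by
      rw [hH, FourierTransform.fourier_fourierInv_eq, liftS_apply]
    rw [← inv, SchwartzMap.fourier_coe, Real.fourier_eq', ← integral_transfer]
    have h2 : ∀ w : EuclideanSpace ℝ (Fin m), G w.ofLp * Complex.exp (-Complex.I * (ip u w.ofLp : ℝ))
        = (fun v => Complex.exp ((↑(-2 * Real.pi * inner ℝ v (WithLp.toLp 2 u)) * Complex.I)) • H v)
          ((2 * Real.pi)⁻¹ • w) := by
      intro w
      simp only [smul_eq_mul]
      rw [key, inner_smul_left, inner_ip, mul_comm, ip_comm u]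
      congr 2
      have h3 : -2 * Real.pi * ((starRingEnd ℝ) (2 * Real.pi)⁻¹ * ip w.ofLp u) = - ip w.ofLp u := by
        simp only [conj_trivial]
        field_simp
      rw [h3]; push_cast; ring
    simp only [h2]
    refine (Measure.integral_comp_smul volume (fun v : EuclideanSpace ℝ (Fin m) =>
      Complex.exp ((↑(-2 * Real.pi * inner ℝ v (WithLp.toLp 2 u)) * Complex.I)) • H v) (2 * Real.pi)⁻¹).trans ?_
    rw [finrank_euclideanSpace_fin, inv_pow, inv_inv, abs_of_pos (by positivity), Complex.real_smul]

end Fourier1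

section Final

attribute [local instance] clRing clTower clComm clNS

lemma cconj_add (a b : Cl m) : cconj (a + b) = cconj a + cconj b :=
  Cl_ext fun S => map_add (starRingEnd ℂ) (coeff a S) (coeff b S)

lemma cconj_zero : cconj (0 : Cl m) = 0 :=
  Cl_ext fun S => map_zero (starRingEnd ℂ)

lemma cconj_smul (r : ℝ) (a : Cl m) : cconj ((r : ℂ) • a) = (r : ℂ) • cconj a :=
  Cl_ext fun S => (map_mul (starRingEnd ℂ) (r : ℂ) (coeff a S)).trans (by rw [Complex.conj_ofReal]; rfl)

lemma cconj_coeff (a : Cl m) (S) : coeff (cconj a) S = starRingEnd ℂ (coeff a S) := rfl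

lemma cconj_one : cconj (1 : Cl m) = 1 := Cl_ext fun S => by
  rw [cconj_coeff, coeff_one]; split_ifs <;> simp

lemma cconj_e (i : Fin m) : cconj (e m i) = e m i := Cl_ext fun S => by
  have : coeff (e m i) S = if S = {i} then 1 else 0 := rfl
  rw [cconj_coeff, this]; split_ifs <;> simp

lemma cconj_mul (a b : Cl m) : cconj (a * b) = cconj a * cconj b := Cl_ext fun S => by
  rw [cconj_coeff, mul_apply, mul_apply, map_sum]
  refine Finset.sum_congr rfl fun T _ => ?_
  rw [map_mul, map_mul, cconj_coeff, cconj_coeff]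
  congr 2
  simp only [sg, map_prod]
  refine Finset.prod_congr rfl fun t _ => Finset.prod_congr rfl fun u _ => ?_
  split_ifs <;> simp

lemma cconj_sum {ι : Type*} (s : Finset ι) (F : ι → Cl m) :
    cconj (∑ i ∈ s, F i) = ∑ i ∈ s, cconj (F i) := by
  classical
  induction s using Finset.induction_on with
  | empty => simp [cconj_zero]
  | insert a s ha ih => rw [Finset.sum_insert ha, Finset.sum_insert ha, cconj_add, ih]

lemma cconj_wedge (x y : Fin m → ℝ) : cconj (wedge m x y) = wedge m x y := by
  rw [wedge, cconj_sum]
  refine Finset.sum_congr rfl fun j _ => ?_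
  rw [cconj_sum]
  refine Finset.sum_congr rfl fun k _ => ?_
  split_ifs
  · rw [cconj_smul, cconj_mul, cconj_e, cconj_e]
  · exact cconj_zero

lemma cconj_K (n : ℕ) (hm : m = 2 * n + 2) (x y : Fin m → ℝ) :
    cconj (Kminus m x y) = Kminus m x y := by
  obtain ⟨a, c, h, -⟩ := K_form n hm x y
  rw [h, cconj_add, cconj_smul, cconj_smul, cconj_one, cconj_wedge]

lemma K_zero (n : ℕ) (hm : m = 2 * n + 2) (y : Fin m → ℝ) : Kminus m 0 y = 1 := by
  have h1 := V_K n hm 0 y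
  have h2 := V_exp n Complex.I Complex.I_sq 0 y
  have hip : ip (0 : Fin m → ℝ) y = 0 := by simp [ip]
  have hip0 : ip (0 : Fin m → ℝ) 0 = 0 := by simp [ip]
  have hv : vec m (0 : Fin m → ℝ) = 0 := by simp [vec]
  have e : ∀ k, V n ((-1)^k) ((-1)^n) k (0 : Fin m → ℝ) y = V n (Complex.I^k) (Complex.I^k) k 0 y := by
    intro k
    rcases k with _ | k
    · rw [V, V, PP, QP, U_eq, U_eq]
      simp only [Uc, QQ, QQ', hip, hip0, hv]
      simp [EE]
    · rw [V, V, PP, QP, U_eq, U_eq]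
      simp only [Uc, QQ, QQ', hip, hip0, hv]
      simp [EE]
  simp only [e] at h1
  rw [h1.unique h2, hip]; simp

lemma main_result (n : ℕ) (hm : m = 2 * n + 2) (f₀ : ℝ → ℝ) (f : SchwartzMap (Fin m → ℝ) ℝ)
    (hrad : ∀ x, f x = f₀ (nrm x)) (x y : Fin m → ℝ) :
    tau m (fun v => f v • (1 : Cl m)) y x = f₀ (nrm (x - y)) • (1 : Cl m) := by
  set c : ℝ := (2*Real.pi) ^ (-(m:ℝ)/2) with hc
  have hcc : (c : ℂ) * c * (((2 * Real.pi) ^ m : ℝ) : ℂ) = 1 := by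
    rw [← Complex.ofReal_mul, ← Complex.ofReal_mul, hc, ← Real.rpow_add (by positivity),
      ← Real.rpow_natCast, ← Real.rpow_add (by positivity)]
    rw [show -(m:ℝ)/2 + -(m:ℝ)/2 + (m:ℝ) = 0 by ring, Real.rpow_zero]; simp
  have hfr : ∀ j l : Fin m, j < l → ∀ θ ξ, f (rot j l θ ξ) = f ξ := by
    intro j l h θ ξ
    rw [hrad, hrad, nrm, nrm, ip_rot j l h]
  obtain ⟨G, hG⟩ : ∃ G : (Fin m → ℝ) → ℂ,
      ∀ ξ, G ξ = ∫ v, (f v : ℂ) * Complex.exp (Complex.I * (ip v ξ : ℝ)) := ⟨_, fun _ => rfl⟩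
  obtain ⟨hGi, hGinv⟩ := fourier_part f G hG
  have hGr : ∀ j l : Fin m, j < l → ∀ θ ξ, G (rot j l θ ξ) = G ξ := by
    intro j l h θ ξ
    rw [hG, hG]
    have hcont : Continuous (fun v : Fin m → ℝ => (f v : ℂ) * Complex.exp (Complex.I * (ip v (rot j l θ ξ) : ℝ))) := by
      have c1 : Continuous (fun v : Fin m → ℝ => ip v (rot j l θ ξ)) := continuous_ip continuous_id continuous_const
      have c2 := f.continuous
      fun_prop
    have h1 := rot_mp j l h θ
    rw [← h1.map_eq]
    rw [integral_map h1.measurable.aemeasurable hcont.aestronglyMeasurable, h1.map_eq]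
    refine integral_congr_ae (Filter.Eventually.of_forall fun v => ?_)
    simp only
    rw [hfr j l h, ip_rot j l h]
  have hF : ∀ ξ, Fm m (fun v => f v • (1 : Cl m)) ξ = ((c : ℂ) * G ξ) • (1 : Cl m) := by
    intro ξ
    have h2 := general_main n hm (h := fun v => (f v : ℂ)) f.integrable.ofReal
      (fun j l h θ ξ => by simp only [hfr j l h]) ξ 0
    rw [Fm, ← hc, rsmul_eq, mul_smul]
    congr 1
    have h3 : ∀ v, Kminus m v ξ * (f v • (1 : Cl m)) = (f v : ℂ) • (Kminus m v ξ * Kminus m 0 v) := by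
      intro v
      rw [K_zero n hm, rsmul_eq, mul_smul_comm]
    simp only [h3]
    rw [h2, hG]
    congr 1
    refine integral_congr_ae (Filter.Eventually.of_forall fun v => ?_)
    simp [ip]
  rw [tau, ← hc]
  have h4 : ∀ ξ, cconj (Kminus m ξ x) * (Kminus m y ξ * Fm m (fun v => f v • (1 : Cl m)) ξ)
      = (c : ℂ) • (G ξ • (Kminus m ξ x * Kminus m y ξ)) := by
    intro ξ
    rw [cconj_K n hm, hF, mul_smul_comm, mul_one, mul_smul_comm, mul_smul]
  simp only [h4]
  rw [integral_smul, general_main n hm hGi hGr, rsmul_eq, smul_smul, smul_smul, rsmul_eq]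
  congr 1
  have h5 : ∀ ξ : Fin m → ℝ, G ξ * (Complex.exp (Complex.I * (ip ξ x : ℝ)) * Complex.exp (-Complex.I * (ip y ξ : ℝ)))
      = G ξ * Complex.exp (-Complex.I * (ip (y - x) ξ : ℝ)) := by
    intro ξ
    rw [← Complex.exp_add]
    have : ip (y - x) ξ = ip y ξ - ip ξ x := by
      rw [ip_comm ξ x]
      simp [ip, sub_mul, Finset.sum_sub_distrib]
    rw [this]
    congr 2
    push_cast; ring
  simp only [h5]
  rw [hGinv, ← mul_assoc, hcc, one_mul, hrad]
  congr 2
  rw [nrm, nrm]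
  congr 1
  simp only [ip, Pi.sub_apply]
  exact Finset.sum_congr rfl fun i _ => by ring

end Final

/-- For even `m`, the generalized translation operator associated with the
Clifford-Fourier transform coincides with the classical translation on real-valued
radial Schwartz functions: `τ_y f(x) = f₀(|x-y|)` when `f(x) = f₀(|x|)`. -/
theorem generalized_translation_radial (m : ℕ) (hme : Even m) (hm : 2 ≤ m)
    (f₀ : ℝ → ℝ) (f : SchwartzMap (Fin m → ℝ) ℝ) (hrad : ∀ x, f x = f₀ (nrm x))
    (x y : Fin m → ℝ) :
    tau m (fun v => f v • (1 : Cl m)) y x = f₀ (nrm (x - y)) • (1 : Cl m) := by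
  obtain ⟨k, hk⟩ := hme
  exact main_result (k - 1) (by omega) f₀ f hrad x y

end CliffordFourier
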